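/- Let S be a quasi-hereditary algebra with Ringel dual S'. For every λ ∈ Λ⁺, the injective dimension of the costandard module ∇(λ) of S equals the ∇-filtration dimension of the standard module Δ'(λ) of S': inj(∇(λ)) = gfd(Δ'(λ)). -/

import Mathlib

/-!
Common definitions for formalizing "On the global and ∇-filtration dimensions of
quasi-hereditary algebras" by Erdmann and Parker.

We work with a finite-dimensional algebra `S` over a field `k`; since `S` is
finite dimensional over `k`, the finite-dimensional `S`-modules are exactly the
finitely generated ones, so we express finite-dimensionality of a module `M` as
`Module.Finite S M`.
-/

open CategoryTheory

namespace QHPaper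

variable (S : Type) [Ring S]

/-- The subquotient `B ⧸ A` associated to two submodules `A B` of `M`. -/
abbrev subquot {M : ModuleCat.{0} S} (A B : Submodule S ↥M) : Type :=
  ↥B ⧸ (Submodule.comap B.subtype A)

/-- A filtration `⊥ = f 0 ≤ f 1 ≤ ⋯ ≤ f n = ⊤` of `M` whose `i`-th section
`f (i+1) / f i` is isomorphic to the prescribed module `D i`. -/
def HasFiltrationWithSections (M : ModuleCat.{0} S) (n : ℕ)
    (f : Fin (n + 1) → Submodule S ↥M) (D : Fin n → ModuleCat.{0} S) : Prop :=
  Monotone f ∧ f 0 = ⊥ ∧ f (Fin.last n) = ⊤ ∧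
    ∀ i : Fin n, Nonempty ((subquot S (f i.castSucc) (f i.succ)) ≃ₗ[S] ↥(D i))

/-- `L` occurs as a (simple) subquotient of `M`; for `L` simple this says that `L`
is a composition factor of `M`. -/
def IsCompFactor (L M : ModuleCat.{0} S) : Prop :=
  ∃ (A B : Submodule S ↥M), A ≤ B ∧ Nonempty ((subquot S A B) ≃ₗ[S] ↥L)

/-- `L` occurs with multiplicity `m` among the sections of a composition series of `M`. -/
def CompFactorMult (L M : ModuleCat.{0} S) (m : ℕ) : Prop :=
  ∃ (n : ℕ) (f : Fin (n + 1) → Submodule S ↥M),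
    Monotone f ∧ f 0 = ⊥ ∧ f (Fin.last n) = ⊤ ∧
    (∀ i : Fin n, IsSimpleModule S (subquot S (f i.castSucc) (f i.succ))) ∧
    Nat.card {i : Fin n // Nonempty ((subquot S (f i.castSucc) (f i.succ)) ≃ₗ[S] ↥L)} = m

/-- `P` is a projective cover of `M`: `P` is projective and there is a surjection
`P → M` whose kernel is superfluous in `P`. -/
def IsProjCover (P M : ModuleCat.{0} S) : Prop :=
  Module.Projective S ↥P ∧ ∃ π : ↥P →ₗ[S] ↥M, Function.Surjective π ∧
    ∀ N : Submodule S ↥P, N ⊔ LinearMap.ker π = ⊤ → N = ⊤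

/-- `I` is an injective hull of `M`: `I` is injective and there is an injection
`M → I` with essential image. -/
def IsInjHull (I M : ModuleCat.{0} S) : Prop :=
  Module.Injective S ↥I ∧ ∃ ι : ↥M →ₗ[S] ↥I, Function.Injective ι ∧
    ∀ N : Submodule S ↥I, N ⊓ LinearMap.range ι = ⊥ → N = ⊥

/-- The data of a quasi-hereditary algebra structure on `S` with weight poset `Λ`:
a full set `L` of pairwise non-isomorphic simple modules, their projective covers `P`
and injective hulls `I`, the standard modules `std` (largest quotient of `P lam` with
all composition factors `L mu`, `mu ≤ lam`), the costandard modules `costd`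
(largest submodule of `I lam` with all composition factors `L mu`, `mu ≤ lam`),
such that `L lam` occurs exactly once in `std lam` and `P lam` is filtered by
standard modules `std mu` with `mu ≥ lam`, with `std lam` occurring exactly once. -/
structure QHData (Λ : Type) [Fintype Λ] [PartialOrder Λ] where
  L : Λ → ModuleCat.{0} S
  P : Λ → ModuleCat.{0} S
  I : Λ → ModuleCat.{0} S
  std : Λ → ModuleCat.{0} S
  costd : Λ → ModuleCat.{0} S
  finiteL : ∀ lam, Module.Finite S ↥(L lam)
  simpleL : ∀ lam, IsSimpleModule S ↥(L lam)
  nonisoL : ∀ lam mu, lam ≠ mu → IsEmpty (↥(L lam) ≃ₗ[S] ↥(L mu))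
  fullL : ∀ M : ModuleCat.{0} S, IsSimpleModule S ↥M → ∃ lam, Nonempty (↥M ≃ₗ[S] ↥(L lam))
  projCover : ∀ lam, IsProjCover S (P lam) (L lam)
  injHull : ∀ lam, IsInjHull S (I lam) (L lam)
  stdSpec : ∀ lam, ∃ K : Submodule S ↥(P lam),
    Nonempty (↥(std lam) ≃ₗ[S] (↥(P lam) ⧸ K)) ∧
    (∀ mu, IsCompFactor S (L mu) (ModuleCat.of S (↥(P lam) ⧸ K)) → mu ≤ lam) ∧
    ∀ K' : Submodule S ↥(P lam),
      (∀ mu, IsCompFactor S (L mu) (ModuleCat.of S (↥(P lam) ⧸ K')) → mu ≤ lam) → K ≤ K'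
  costdSpec : ∀ lam, ∃ V : Submodule S ↥(I lam),
    Nonempty (↥(costd lam) ≃ₗ[S] ↥V) ∧
    (∀ mu, IsCompFactor S (L mu) (ModuleCat.of S ↥V) → mu ≤ lam) ∧
    ∀ V' : Submodule S ↥(I lam),
      (∀ mu, IsCompFactor S (L mu) (ModuleCat.of S ↥V') → mu ≤ lam) → V' ≤ V
  multOne : ∀ lam, CompFactorMult S (L lam) (std lam) 1
  projFilt : ∀ lam, ∃ (n : ℕ) (f : Fin (n + 1) → Submodule S ↥(P lam)) (g : Fin n → Λ),
    HasFiltrationWithSections S (P lam) n f (fun i => std (g i)) ∧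
    (∀ i, lam ≤ g i) ∧ Nat.card {i : Fin n // g i = lam} = 1

variable {Λ : Type} [Fintype Λ] [PartialOrder Λ]

/-- `M` has a filtration with costandard sections, i.e. `M ∈ F(∇)`. -/
def InCostdFilt (Q : QHData S Λ) (M : ModuleCat.{0} S) : Prop :=
  ∃ (n : ℕ) (f : Fin (n + 1) → Submodule S ↥M) (g : Fin n → Λ),
    HasFiltrationWithSections S M n f (fun i => Q.costd (g i))

/-- `M` has a filtration with standard sections, i.e. `M ∈ F(Δ)`. -/
def InStdFilt (Q : QHData S Λ) (M : ModuleCat.{0} S) : Prop :=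
  ∃ (n : ℕ) (f : Fin (n + 1) → Submodule S ↥M) (g : Fin n → Λ),
    HasFiltrationWithSections S M n f (fun i => Q.std (g i))

/-- `0 → N 0 → N 1 → ⋯ → N (n+1) → 0` is exact. -/
def IsExactSeq (n : ℕ) (N : Fin (n + 2) → ModuleCat.{0} S)
    (f : ∀ i : Fin (n + 1), ↥(N i.castSucc) →ₗ[S] ↥(N i.succ)) : Prop :=
  Function.Injective (f 0) ∧ Function.Surjective (f (Fin.last n)) ∧
    ∀ i : Fin n, LinearMap.range (f i.castSucc) = LinearMap.ker (f i.succ)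

/-- `M` has a ∇-resolution (co-resolution by modules in `F(∇)`) of length `d`:
`0 → M → M₀ → ⋯ → M_d → 0` with each `Mᵢ ∈ F(∇)`. -/
def GfdLE (Q : QHData S Λ) (M : ModuleCat.{0} S) (d : ℕ) : Prop :=
  ∃ (N : Fin (d + 2) → ModuleCat.{0} S)
    (f : ∀ i : Fin (d + 1), ↥(N i.castSucc) →ₗ[S] ↥(N i.succ)),
    IsExactSeq S d N f ∧ N 0 = M ∧ ∀ i : Fin (d + 1), InCostdFilt S Q (N i.succ)

/-- The ∇-filtration dimension (good filtration dimension) of a module. -/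
noncomputable def gfd (Q : QHData S Λ) (M : ModuleCat.{0} S) : ℕ :=
  sInf {d | GfdLE S Q M d}

/-- `M` has a resolution `0 → M_d → ⋯ → M₀ → M → 0` with each `Mᵢ ∈ F(Δ)`. -/
def WfdLE (Q : QHData S Λ) (M : ModuleCat.{0} S) (d : ℕ) : Prop :=
  ∃ (N : Fin (d + 2) → ModuleCat.{0} S)
    (f : ∀ i : Fin (d + 1), ↥(N i.castSucc) →ₗ[S] ↥(N i.succ)),
    IsExactSeq S d N f ∧ N (Fin.last (d + 1)) = M ∧
    ∀ i : Fin (d + 1), InStdFilt S Q (N i.castSucc)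

/-- The Δ-filtration dimension of a module. -/
noncomputable def wfd (Q : QHData S Λ) (M : ModuleCat.{0} S) : ℕ :=
  sInf {d | WfdLE S Q M d}

/-- `M` has a projective resolution of length `d`. -/
def ProjdimLE (M : ModuleCat.{0} S) (d : ℕ) : Prop :=
  ∃ (N : Fin (d + 2) → ModuleCat.{0} S)
    (f : ∀ i : Fin (d + 1), ↥(N i.castSucc) →ₗ[S] ↥(N i.succ)),
    IsExactSeq S d N f ∧ N (Fin.last (d + 1)) = M ∧
    ∀ i : Fin (d + 1), Module.Projective S ↥(N i.castSucc)

/-- The projective dimension of a module. -/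
noncomputable def projdim (M : ModuleCat.{0} S) : ℕ :=
  sInf {d | ProjdimLE S M d}

/-- `M` has an injective resolution of length `d`. -/
def InjdimLE (M : ModuleCat.{0} S) (d : ℕ) : Prop :=
  ∃ (N : Fin (d + 2) → ModuleCat.{0} S)
    (f : ∀ i : Fin (d + 1), ↥(N i.castSucc) →ₗ[S] ↥(N i.succ)),
    IsExactSeq S d N f ∧ N 0 = M ∧
    ∀ i : Fin (d + 1), Module.Injective S ↥(N i.succ)

/-- The injective dimension of a module. -/
noncomputable def injdim (M : ModuleCat.{0} S) : ℕ :=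
  sInf {d | InjdimLE S M d}

/-- `gfd(S)`: the supremum of the ∇-filtration dimensions of all
finite-dimensional `S`-modules. -/
noncomputable def gfdAlg (Q : QHData S Λ) : ℕ :=
  sSup {d | ∃ M : ModuleCat.{0} S, Module.Finite S ↥M ∧ gfd S Q M = d}

/-- `wfd(S)`: the supremum of the Δ-filtration dimensions of all
finite-dimensional `S`-modules. -/
noncomputable def wfdAlg (Q : QHData S Λ) : ℕ :=
  sSup {d | ∃ M : ModuleCat.{0} S, Module.Finite S ↥M ∧ wfd S Q M = d}

/-- The global dimension of `S`: the supremum of the projective dimensions of all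
finite-dimensional `S`-modules. -/
noncomputable def globdim : ℕ :=
  sSup {d | ∃ M : ModuleCat.{0} S, Module.Finite S ↥M ∧ projdim S M = d}

/-- `Ext^n_S(A, B) ≠ 0`. -/
noncomputable def extNe (A B : ModuleCat.{0} S) (n : ℕ) : Prop :=
  Nontrivial ↥(((Ext ℤ (ModuleCat.{0} S) n).obj (Opposite.op A)).obj B)

/-- A simple-preserving duality on `S`: a contravariant, exact, fully faithful,
additive self-functor `D` on the category of finite-dimensional `S`-modules with
`D (D M) ≅ M` and `D (L lam) ≅ L lam` for all `lam`. -/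
structure Duality (Q : QHData S Λ) where
  D : ModuleCat.{0} S → ModuleCat.{0} S
  Dmap : ∀ {A B : ModuleCat.{0} S}, (↥A →ₗ[S] ↥B) → (↥(D B) →ₗ[S] ↥(D A))
  finD : ∀ M : ModuleCat.{0} S, Module.Finite S ↥M → Module.Finite S ↥(D M)
  Did : ∀ A : ModuleCat.{0} S, Module.Finite S ↥A →
    Dmap (LinearMap.id : ↥A →ₗ[S] ↥A) = LinearMap.id
  Dcomp : ∀ {A B C : ModuleCat.{0} S}, Module.Finite S ↥A → Module.Finite S ↥B →
    Module.Finite S ↥C → ∀ (f : ↥A →ₗ[S] ↥B) (g : ↥B →ₗ[S] ↥C),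
      Dmap (g ∘ₗ f) = Dmap f ∘ₗ Dmap g
  Dadd : ∀ {A B : ModuleCat.{0} S}, Module.Finite S ↥A → Module.Finite S ↥B →
    ∀ (f g : ↥A →ₗ[S] ↥B), Dmap (f + g) = Dmap f + Dmap g
  Dfull : ∀ {A B : ModuleCat.{0} S}, Module.Finite S ↥A → Module.Finite S ↥B →
    Function.Bijective (fun f : ↥A →ₗ[S] ↥B => Dmap f)
  Dexact : ∀ {A B C : ModuleCat.{0} S}, Module.Finite S ↥A → Module.Finite S ↥B →
    Module.Finite S ↥C → ∀ (f : ↥A →ₗ[S] ↥B) (g : ↥B →ₗ[S] ↥C),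
      Function.Injective f → Function.Surjective g →
      LinearMap.range f = LinearMap.ker g →
      Function.Injective (Dmap g) ∧ Function.Surjective (Dmap f) ∧
        LinearMap.range (Dmap g) = LinearMap.ker (Dmap f)
  Dinvol : ∀ M : ModuleCat.{0} S, Module.Finite S ↥M → Nonempty (↥(D (D M)) ≃ₗ[S] ↥M)
  DL : ∀ lam, Nonempty (↥(D (Q.L lam)) ≃ₗ[S] ↥(Q.L lam))

/-- Strong property A: `mu < lam` implies `gfd (L mu) < gfd (L lam)`. -/
def StrongPropA (Q : QHData S Λ) : Prop :=
  ∀ mu lam : Λ, mu < lam → gfd S Q (Q.L mu) < gfd S Q (Q.L lam)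

/-- Property A: `mu < lam` implies `gfd (L mu) ≤ gfd (L lam)`. -/
def PropA (Q : QHData S Λ) : Prop :=
  ∀ mu lam : Λ, mu < lam → gfd S Q (Q.L mu) ≤ gfd S Q (Q.L lam)

/-- Property B: `mu < lam` implies `wfd (∇ mu) ≤ wfd (∇ lam)`. -/
def PropB (Q : QHData S Λ) : Prop :=
  ∀ mu lam : Λ, mu < lam → wfd S Q (Q.costd mu) ≤ wfd S Q (Q.costd lam)

/-- Property C: `wfd (∇ lam) = gfd S - inj (∇ lam)` for all `lam`. -/
def PropC (Q : QHData S Λ) : Prop :=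
  ∀ lam : Λ, wfd S Q (Q.costd lam) = gfdAlg S Q - injdim S (Q.costd lam)

/-- Property D: `wfd (∇ lam) = wfd (L lam)` for all `lam`. -/
def PropD (Q : QHData S Λ) : Prop :=
  ∀ lam : Λ, wfd S Q (Q.costd lam) = wfd S Q (Q.L lam)

/-- Property E: `mu < lam` implies `inj (∇ mu) ≥ inj (∇ lam)`. -/
def PropE (Q : QHData S Λ) : Prop :=
  ∀ mu lam : Λ, mu < lam → injdim S (Q.costd lam) ≤ injdim S (Q.costd mu)

/-- The partial order is minimal for the quasi-hereditary structure: whenever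
`mu < lam` are adjacent, `L mu` is a composition factor of `Δ lam` or of `∇ lam`. -/
def MinimalOrder (Q : QHData S Λ) : Prop :=
  ∀ mu lam : Λ, mu < lam → (¬ ∃ nu, mu < nu ∧ nu < lam) →
    IsCompFactor S (Q.L mu) (Q.std lam) ∨ IsCompFactor S (Q.L mu) (Q.costd lam)

/-- `S` is connected (indecomposable as an algebra, i.e. one block): the only
central idempotents are `0` and `1`. -/
def ConnectedRing : Prop :=
  ∀ c : S, c * c = c → (∀ s : S, c * s = s * c) → c = 0 ∨ c = 1

/-- A tilting module: a module in `F(Δ) ∩ F(∇)`. -/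
def IsTilting (Q : QHData S Λ) (T : ModuleCat.{0} S) : Prop :=
  InStdFilt S Q T ∧ InCostdFilt S Q T

/-- The indecomposable tilting module `T(lam)`: an indecomposable tilting module in
which `L lam` occurs exactly once and all other composition factors `L mu` have
`mu < lam`. -/
def IsIndecTilting (Q : QHData S Λ) (lam : Λ) (T : ModuleCat.{0} S) : Prop :=
  IsTilting S Q T ∧ Nontrivial ↥T ∧
    (∀ A B : Submodule S ↥T, IsCompl A B → A = ⊥ ∨ B = ⊥) ∧
    CompFactorMult S (Q.L lam) T 1 ∧
    ∀ mu, IsCompFactor S (Q.L mu) T → mu = lam ∨ mu < lam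

/-- A full tilting module: a (finite-dimensional) tilting module having every
indecomposable tilting module as a direct summand. -/
def IsFullTilting (Q : QHData S Λ) (T : ModuleCat.{0} S) : Prop :=
  IsTilting S Q T ∧ Module.Finite S ↥T ∧
    ∀ (lam : Λ) (Tl : ModuleCat.{0} S), IsIndecTilting S Q lam Tl →
      ∃ Cc : ModuleCat.{0} S, Nonempty (↥T ≃ₗ[S] (↥Tl × ↥Cc))

/-- The Ringel dual ring `S' = End_S(T)^op`. -/
abbrev RingelDualRing (T : ModuleCat.{0} S) : Type := (Module.End S ↥T)ᵐᵒᵖ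

/-- `Hom_S(T, X)` is a module over `S' = End_S(T)^op` via `f • φ = φ ∘ f`. -/
instance homTModule (T X : ModuleCat.{0} S) :
    Module (RingelDualRing S T) (↥T →ₗ[S] ↥X) where
  smul a φ := φ ∘ₗ a.unop
  one_smul φ := rfl
  mul_smul a b φ := rfl
  smul_zero a := rfl
  smul_add a φ ψ := rfl
  add_smul a b φ := by
    ext x
    show φ ((a.unop + b.unop) x) = φ (a.unop x) + φ (b.unop x)
    rw [LinearMap.add_apply, map_add]
  zero_smul φ := by
    ext x
    show φ ((0 : Module.End S ↥T) x) = 0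
    rw [LinearMap.zero_apply, map_zero]

/-- The `S'`-module `Hom_S(T, X)`, i.e. the image of `X` under the functor
`F = Hom_S(T, -)`. -/
noncomputable def homTMod (T X : ModuleCat.{0} S) :
    ModuleCat.{0} (RingelDualRing S T) :=
  ModuleCat.of (RingelDualRing S T) (↥T →ₗ[S] ↥X)

/-- `Q'` is a Ringel dual quasi-hereditary structure for `(Q, T)`:
`T` is a full tilting module, `Q'` is a quasi-hereditary structure on
`S' = End_S(T)^op` for the opposite poset, and its standard modules are
`Δ'(lam) = Hom_S(T, ∇(lam))`. -/
def IsRingelDualData (Q : QHData S Λ) (T : ModuleCat.{0} S)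
    (Q' : QHData (RingelDualRing S T) Λᵒᵈ) : Prop :=
  IsFullTilting S Q T ∧
    ∀ lam : Λ, Nonempty
      (↥(Q'.std (OrderDual.toDual lam)) ≃ₗ[RingelDualRing S T]
        (↥T →ₗ[S] ↥(Q.costd lam)))

/-- `0 → T_d → ⋯ → T_0 → M → 0` exact with all `T_i` tilting modules. -/
def TiltResLE (Q : QHData S Λ) (M : ModuleCat.{0} S) (d : ℕ) : Prop :=
  ∃ (N : Fin (d + 2) → ModuleCat.{0} S)
    (f : ∀ i : Fin (d + 1), ↥(N i.castSucc) →ₗ[S] ↥(N i.succ)),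
    IsExactSeq S d N f ∧ N (Fin.last (d + 1)) = M ∧
    ∀ i : Fin (d + 1), IsTilting S Q (N i.castSucc)

/-- An idempotent `e` is primitive if it is nonzero and is not the sum of two
nonzero orthogonal idempotents. -/
def IsPrimitiveIdempotent (e : S) : Prop :=
  e * e = e ∧ e ≠ 0 ∧ ∀ a b : S, a * a = a → b * b = b → a * b = 0 → b * a = 0 →
    e = a + b → a = 0 ∨ b = 0

/-- The additive subgroup `e•M = {m | e • m = m}` of `M` (for `e` idempotent). -/
def cornerSet (eG : S) (M : ModuleCat.{0} S) : AddSubgroup ↥M where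
  carrier := {m | eG • m = m}
  add_mem' := by
    intro a b ha hb
    simp only [Set.mem_setOf_eq] at *
    rw [smul_add, ha, hb]
  zero_mem' := by
    simp only [Set.mem_setOf_eq]
    rw [smul_zero]
  neg_mem' := by
    intro a ha
    simp only [Set.mem_setOf_eq] at *
    rw [smul_neg, ha]

/-- The `R`-module structure on `e•M`, where `ι : R → S` identifies `R` with the
corner ring `eSe` (as a non-unital ring, with `ι 1 = e`). -/
def cornerModuleStructure (R : Type) [Ring R] (ι : R →ₙ+* S) (eG : S)
    (hone : ι 1 = eG) (hrange : ∀ r : R, eG * ι r * eG = ι r)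
    (M : ModuleCat.{0} S) : Module R ↥(cornerSet S eG M) where
  smul r m := ⟨ι r • (m : ↥M), by
    have hm : eG • (m : ↥M) = (m : ↥M) := m.2
    show eG • (ι r • (m : ↥M)) = ι r • (m : ↥M)
    have h : eG • (ι r • (m : ↥M)) = (eG * ι r * eG) • (m : ↥M) := by
      rw [mul_assoc, mul_smul, mul_smul, hm]
    rw [h, hrange]⟩
  one_smul m := by
    apply Subtype.ext
    show ι 1 • (m : ↥M) = (m : ↥M)
    rw [hone]
    exact m.2
  mul_smul r s m := by
    apply Subtype.ext
    show ι (r * s) • (m : ↥M) = ι r • (ι s • (m : ↥M))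
    rw [map_mul, mul_smul]
  smul_zero r := by
    apply Subtype.ext
    show ι r • (0 : ↥M) = 0
    rw [smul_zero]
  smul_add r m n := by
    apply Subtype.ext
    show ι r • ((m : ↥M) + (n : ↥M)) = ι r • (m : ↥M) + ι r • (n : ↥M)
    rw [smul_add]
  add_smul r s m := by
    apply Subtype.ext
    show ι (r + s) • (m : ↥M) = ι r • (m : ↥M) + ι s • (m : ↥M)
    rw [map_add, add_smul]
  zero_smul m := by
    apply Subtype.ext
    show ι 0 • (m : ↥M) = 0
    rw [map_zero, zero_smul]

/-- The `R`-module `e•M`, where `R ≅ eSe` via `ι`. -/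
noncomputable def cornerMod (R : Type) [Ring R] (ι : R →ₙ+* S) (eG : S)
    (hone : ι 1 = eG) (hrange : ∀ r : R, eG * ι r * eG = ι r)
    (M : ModuleCat.{0} S) : ModuleCat.{0} R :=
  @ModuleCat.of R _ ↥(cornerSet S eG M) _
    (cornerModuleStructure S R ι eG hone hrange M)

end QHPaper


namespace QHPaper
open Abelian

section ExtAPI
variable {R : Type} [Ring R]

/-- Short exact sequences of modules, in terms of linear maps. -/
structure Ses {A B C : ModuleCat.{0} R} (f : ↥A →ₗ[R] ↥B) (g : ↥B →ₗ[R] ↥C) : Prop where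
  inj : Function.Injective f
  surj : Function.Surjective g
  ex : Function.Exact f g

/-- Vanishing of `Ext^n(A,B)`. -/
def EZ (A B : ModuleCat.{0} R) (n : ℕ) : Prop := Subsingleton (Ext A B n)

variable {A B C X : ModuleCat.{0} R} {f : ↥A →ₗ[R] ↥B} {g : ↥B →ₗ[R] ↥C}

/-- The associated short complex. -/
abbrev Ses.sc (h : Ses f g) : ShortComplex (ModuleCat.{0} R) :=
  ShortComplex.mk (ModuleCat.ofHom f) (ModuleCat.ofHom g)
    (by ext x; exact h.ex.apply_apply_eq_zero x)

theorem Ses.shortExact (h : Ses f g) : h.sc.ShortExact :=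
  ModuleCat.shortComplex_shortExact _ h.ex h.inj h.surj

theorem ez_iff {A B : ModuleCat.{0} R} {n : ℕ} : EZ A B n ↔ ∀ x : Ext A B n, x = 0 :=
  ⟨fun h _ => h.elim _ _, fun h => ⟨fun x y => (h x).trans (h y).symm⟩⟩

/-- middle term, covariant -/
theorem Ses.cov_mid (h : Ses f g) {n : ℕ} (h1 : EZ X A n) (h3 : EZ X C n) : EZ X B n := by
  rw [ez_iff] at *
  intro x
  obtain ⟨y, hy⟩ := Ext.covariant_sequence_exact₂ X h.shortExact x (h3 _)
  obtain rfl : y = 0 := h1 y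
  rw [← hy, Ext.zero_comp]

theorem Ses.cov_right (h : Ses f g) {n : ℕ} (h2 : EZ X B n) (h1 : EZ X A (n+1)) : EZ X C n := by
  rw [ez_iff] at *
  intro x
  obtain ⟨y, hy⟩ := Ext.covariant_sequence_exact₃ X h.shortExact x rfl (h1 _)
  obtain rfl : y = 0 := h2 y
  rw [← hy, Ext.zero_comp]

theorem Ses.cov_left (h : Ses f g) {n : ℕ} (h3 : EZ X C n) (h2 : EZ X B (n+1)) :
    EZ X A (n+1) := by
  rw [ez_iff] at *
  intro x
  obtain ⟨y, hy⟩ := Ext.covariant_sequence_exact₁ X h.shortExact x (h2 _) rfl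
  obtain rfl : y = 0 := h3 y
  rw [← hy, Ext.zero_comp]

theorem Ses.con_mid (h : Ses f g) {n : ℕ} (h1 : EZ A X n) (h3 : EZ C X n) : EZ B X n := by
  rw [ez_iff] at *
  intro x
  obtain ⟨y, hy⟩ := Ext.contravariant_sequence_exact₂ h.shortExact X x (h1 _)
  obtain rfl : y = 0 := h3 y
  rw [← hy, Ext.comp_zero]

theorem Ses.con_right (h : Ses f g) {n : ℕ} (h1 : EZ A X n) (h2 : EZ B X (n+1)) :
    EZ C X (n+1) := by
  rw [ez_iff] at *
  intro x
  obtain ⟨y, hy⟩ := Ext.contravariant_sequence_exact₃ h.shortExact X x (h2 _) (add_comm 1 n)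
  obtain rfl : y = 0 := h1 y
  rw [← hy, Ext.comp_zero]

theorem ez_zero_iff {A B : ModuleCat.{0} R} : EZ A B 0 ↔ ∀ u : ↥A →ₗ[R] ↥B, u = 0 := by
  rw [ez_iff]
  constructor
  · intro h u
    have := (Ext.mk₀_eq_zero_iff (ModuleCat.ofHom u)).1 (h _)
    exact congrArg ModuleCat.Hom.hom this
  · intro h x
    obtain ⟨u, rfl⟩ := (Ext.mk₀_bijective A B).2 x
    rw [Ext.mk₀_eq_zero_iff]
    exact ModuleCat.hom_ext (h u.hom)

/-- lifting along a surjection -/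
theorem Ses.lift (h : Ses f g) (h1 : EZ X A 1) (u : ↥X →ₗ[R] ↥C) :
    ∃ v : ↥X →ₗ[R] ↥B, g ∘ₗ v = u := by
  rw [ez_iff] at h1
  obtain ⟨y, hy⟩ := Ext.covariant_sequence_exact₃ X h.shortExact
    (Ext.mk₀ (ModuleCat.ofHom u)) (n₁ := 1) rfl (h1 _)
  obtain ⟨v, rfl⟩ := (Ext.mk₀_bijective _ _).2 y
  rw [Ext.mk₀_comp_mk₀] at hy
  have := (Ext.mk₀_bijective _ _).1 hy
  exact ⟨v.hom, congrArg ModuleCat.Hom.hom this⟩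

/-- extension along an injection -/
theorem Ses.extend (h : Ses f g) (h1 : EZ C X 1) (u : ↥A →ₗ[R] ↥X) :
    ∃ v : ↥B →ₗ[R] ↥X, v ∘ₗ f = u := by
  rw [ez_iff] at h1
  obtain ⟨y, hy⟩ := Ext.contravariant_sequence_exact₁ h.shortExact X
    (Ext.mk₀ (ModuleCat.ofHom u)) (n₁ := 1) rfl (h1 _)
  obtain ⟨v, rfl⟩ := (Ext.mk₀_bijective _ _).2 y
  rw [Ext.mk₀_comp_mk₀] at hy
  have := (Ext.mk₀_bijective _ _).1 hy
  exact ⟨v.hom, congrArg ModuleCat.Hom.hom this⟩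

/-- if all maps extend, `Ext^1` vanishes -/
theorem Ses.ez_one (h : Ses f g) (h2 : EZ B X 1)
    (he : ∀ u : ↥A →ₗ[R] ↥X, ∃ v : ↥B →ₗ[R] ↥X, v ∘ₗ f = u) : EZ C X 1 := by
  rw [ez_iff] at *
  intro x
  obtain ⟨y, hy⟩ := Ext.contravariant_sequence_exact₃ h.shortExact X x (h2 _) (add_comm 1 0)
  obtain ⟨u, rfl⟩ := (Ext.mk₀_bijective _ _).2 y
  obtain ⟨v, hv⟩ := he u.hom
  have hu : u = h.sc.f ≫ ModuleCat.ofHom v := ModuleCat.hom_ext hv.symm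
  rw [← hy, hu, ← Ext.mk₀_comp_mk₀]
  exact h.shortExact.extClass_comp_assoc _

theorem ez_retract_right {A B Y : ModuleCat.{0} R} {n : ℕ} (i : ↥A →ₗ[R] ↥B) (r : ↥B →ₗ[R] ↥A)
    (h : r ∘ₗ i = LinearMap.id) (hB : EZ Y B n) : EZ Y A n := by
  rw [ez_iff] at *
  intro x
  have e : ModuleCat.ofHom i ≫ ModuleCat.ofHom r = 𝟙 A := by
    apply ModuleCat.hom_ext; exact h
  have : (x.comp (Ext.mk₀ (ModuleCat.ofHom i)) (add_zero n)).comp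
      (Ext.mk₀ (ModuleCat.ofHom r)) (add_zero n) = x := by
    rw [Ext.comp_assoc_of_third_deg_zero, Ext.mk₀_comp_mk₀, e, Ext.comp_mk₀_id]
  rw [← this, hB (x.comp _ _), Ext.zero_comp]

theorem ez_retract_left {A B Y : ModuleCat.{0} R} {n : ℕ} (i : ↥A →ₗ[R] ↥B) (r : ↥B →ₗ[R] ↥A)
    (h : r ∘ₗ i = LinearMap.id) (hB : EZ B Y n) : EZ A Y n := by
  rw [ez_iff] at *
  intro x
  have e : ModuleCat.ofHom i ≫ ModuleCat.ofHom r = 𝟙 A := by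
    apply ModuleCat.hom_ext; exact h
  have : (Ext.mk₀ (ModuleCat.ofHom i)).comp ((Ext.mk₀ (ModuleCat.ofHom r)).comp x (zero_add n))
      (zero_add n) = x := by
    rw [Ext.mk₀_comp_mk₀_assoc, e, Ext.mk₀_id_comp]
  rw [← this, hB (Ext.comp _ x _), Ext.comp_zero]

theorem ez_iso_left {A B Y : ModuleCat.{0} R} {n : ℕ} (e : ↥A ≃ₗ[R] ↥B) (hB : EZ B Y n) :
    EZ A Y n :=
  ez_retract_left e.toLinearMap e.symm.toLinearMap (by ext; simp) hB

theorem ez_iso_right {A B Y : ModuleCat.{0} R} {n : ℕ} (e : ↥A ≃ₗ[R] ↥B) (hB : EZ Y B n) :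
    EZ Y A n :=
  ez_retract_right e.toLinearMap e.symm.toLinearMap (by ext; simp) hB

theorem ez_proj {P Y : ModuleCat.{0} R} (hP : Module.Projective R ↥P) (n : ℕ) :
    EZ P Y (n+1) := by
  have : Projective P := (IsProjective.iff_projective _).1 hP
  exact Ext.subsingleton_of_projective _ _ _

theorem ez_inj {I Y : ModuleCat.{0} R} (hI : Module.Injective R ↥I) (n : ℕ) :
    EZ Y I (n+1) := by
  have : Injective I := (Module.injective_iff_injective_object _ _).1 hI
  exact Ext.subsingleton_of_injective _ _ _

theorem ez_of_subsingleton_left {A Y : ModuleCat.{0} R} (h : Subsingleton ↥A) (n : ℕ) :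
    EZ A Y n := by
  cases n with
  | zero => 
    rw [ez_zero_iff]; intro u; ext x; rw [Subsingleton.elim x 0]; simp
  | succ n => exact ez_proj (Module.Projective.of_lifting_property'' 
      (fun f _ => ⟨0, by ext x; exact Subsingleton.elim _ _⟩)) n

theorem ez_of_subsingleton_right {A Y : ModuleCat.{0} R} (h : Subsingleton ↥A) (n : ℕ) :
    EZ Y A n := by
  cases n with
  | zero => 
    rw [ez_zero_iff]; intro u; ext x; exact Subsingleton.elim _ _
  | succ n => exact ez_inj ⟨fun _ _ _ _ _ _ _ _ _ => ⟨0, fun _ => Subsingleton.elim _ _⟩⟩ n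

theorem ses_sub {M : ModuleCat.{0} R} (N : Submodule R ↥M) :
    Ses (A := ModuleCat.of R ↥N) (B := M) (C := ModuleCat.of R (↥M ⧸ N)) N.subtype N.mkQ where
  inj := Subtype.val_injective
  surj := N.mkQ_surjective
  ex := by rw [LinearMap.exact_iff]; simp

theorem ses_ker {M C : ModuleCat.{0} R} (g : ↥M →ₗ[R] ↥C) (hg : Function.Surjective g) :
    Ses (A := ModuleCat.of R ↥(LinearMap.ker g)) (B := M) (C := C) (LinearMap.ker g).subtype g where
  inj := Subtype.val_injective
  surj := hg
  ex := by rw [LinearMap.exact_iff]; simp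

theorem ses_coker {A M : ModuleCat.{0} R} (f : ↥A →ₗ[R] ↥M) (hf : Function.Injective f) :
    Ses (A := A) (B := M) (C := ModuleCat.of R (↥M ⧸ LinearMap.range f)) f
      (LinearMap.range f).mkQ where
  inj := hf
  surj := Submodule.mkQ_surjective _
  ex := by rw [LinearMap.exact_iff]; simp

end ExtAPI
end QHPaper


namespace QHPaper
section Filt
variable {R : Type} [Ring R]

/-- Modules with a finite filtration with sections in a class. -/
inductive FiltP (Cl : ModuleCat.{0} R → Prop) : ModuleCat.{0} R → Prop
  | zero {M : ModuleCat.{0} R} (h : Subsingleton ↥M) : FiltP Cl M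
  | cons {A M D : ModuleCat.{0} R} {f : ↥A →ₗ[R] ↥M} {g : ↥M →ₗ[R] ↥D}
      (hA : FiltP Cl A) (hD : Cl D) (h : Ses f g) : FiltP Cl M

theorem FiltP.mono {C1 C2 : ModuleCat.{0} R → Prop} (h : ∀ D, C1 D → C2 D) {M : ModuleCat.{0} R}
    (hM : FiltP C1 M) : FiltP C2 M := by
  induction hM with
  | zero h => exact .zero h
  | cons _ hD hs ih => exact .cons ih (h _ hD) hs

theorem FiltP.iso {Cl : ModuleCat.{0} R → Prop} {M N : ModuleCat.{0} R} (hM : FiltP Cl M)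
    (e : ↥M ≃ₗ[R] ↥N) : FiltP Cl N := by
  cases hM with
  | zero h => exact .zero (e.symm.toEquiv.subsingleton)
  | @cons A _ D f g hA hD hs =>
    refine .cons (f := e.toLinearMap ∘ₗ f) (g := g ∘ₗ e.symm.toLinearMap) hA hD ⟨?_, ?_, ?_⟩
    · exact e.injective.comp hs.inj
    · exact hs.surj.comp e.symm.surjective
    · intro y
      have := hs.ex (e.symm y)
      simp only [LinearMap.comp_apply, LinearEquiv.coe_coe, this, Set.mem_range]
      simp [LinearEquiv.eq_symm_apply]

theorem FiltP.single {Cl : ModuleCat.{0} R → Prop} {M : ModuleCat.{0} R} (hM : Cl M) :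
    FiltP Cl M := by
  refine .cons (A := ModuleCat.of R PUnit) (f := 0) (g := LinearMap.id) (.zero inferInstance) hM
    ⟨?_, ?_, ?_⟩
  · intro x y _; exact Subsingleton.elim _ _
  · exact fun x => ⟨x, rfl⟩
  · intro y; simp [eq_comm]

theorem FiltP.ext {Cl : ModuleCat.{0} R → Prop} {C : ModuleCat.{0} R} (hC : FiltP Cl C) :
    ∀ {A B : ModuleCat.{0} R} {f : ↥A →ₗ[R] ↥B} {g : ↥B →ₗ[R] ↥C},
    Ses f g → FiltP Cl A → FiltP Cl B := by
  induction hC with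
  | zero h =>
    intro A B f g hs hA
    refine hA.iso (LinearEquiv.ofBijective f ⟨hs.inj, fun b => ?_⟩)
    exact (hs.ex b).1 (Subsingleton.elim _ _)
  | @cons A' C D f' g' hA' hD hs' ih =>
    intro A B f g hs hA
    let K := LinearMap.ker (g' ∘ₗ g)
    let e := LinearEquiv.ofInjective f' hs'.inj
    let q0 : ↥K →ₗ[R] ↥(LinearMap.range f') :=
      (g ∘ₗ K.subtype).codRestrict _ (fun x => (hs'.ex _).1 x.2)
    let q : ↥K →ₗ[R] ↥A' := e.symm.toLinearMap ∘ₗ q0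
    have hq : ∀ x : ↥K, f' (q x) = g x := by
      intro x
      have : e (q x) = q0 x := by simp [q]
      exact congrArg Subtype.val this
    let i : ↥A →ₗ[R] ↥K := f.codRestrict _ (fun x => by
      show g' (g (f x)) = 0
      rw [hs.ex.apply_apply_eq_zero, map_zero])
    have hS1 : Ses (A := A) (B := ModuleCat.of R ↥K) (C := A') i q := by
      refine ⟨?_, ?_, ?_⟩
      · intro x y h; exact hs.inj (congrArg Subtype.val h)
      · intro a
        obtain ⟨b, hb⟩ := hs.surj (f' a)
        refine ⟨⟨b, ?_⟩, ?_⟩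
        · show g' (g b) = 0
          rw [hb, hs'.ex.apply_apply_eq_zero]
        · apply hs'.inj
          rw [hq]; exact hb
      · intro x
        constructor
        · intro h
          have : g x.1 = 0 := by rw [← hq, h, map_zero]
          obtain ⟨a, ha⟩ := (hs.ex _).1 this
          exact ⟨a, Subtype.ext ha⟩
        · rintro ⟨a, rfl⟩
          apply hs'.inj
          rw [hq, map_zero]
          exact hs.ex.apply_apply_eq_zero a
    have hK := ih hS1 hA
    exact .cons hK hD (ses_ker (M := B) (C := D) (g' ∘ₗ g) (hs'.surj.comp hs.surj))

theorem FiltP.ez_left {Cl : ModuleCat.{0} R → Prop} {M X : ModuleCat.{0} R} {n : ℕ}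
    (h : ∀ D, Cl D → EZ D X n) (hM : FiltP Cl M) : EZ M X n := by
  induction hM with
  | zero h => exact ez_of_subsingleton_left h n
  | cons _ hD hs ih => exact hs.con_mid ih (h _ hD)

theorem FiltP.ez_right {Cl : ModuleCat.{0} R → Prop} {M X : ModuleCat.{0} R} {n : ℕ}
    (h : ∀ D, Cl D → EZ X D n) (hM : FiltP Cl M) : EZ X M n := by
  induction hM with
  | zero h => exact ez_of_subsingleton_right h n
  | cons _ hD hs ih => exact hs.cov_mid ih (h _ hD)

theorem Ses.finite {A B C : ModuleCat.{0} R} {f : ↥A →ₗ[R] ↥B} {g : ↥B →ₗ[R] ↥C} (h : Ses f g)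
    (hA : Module.Finite R ↥A) (hC : Module.Finite R ↥C) : Module.Finite R ↥B := by
  have h1 : (LinearMap.range f) = LinearMap.ker g := (LinearMap.exact_iff.1 h.ex).symm
  have : Module.Finite R ↥(LinearMap.ker g) := by rw [← h1]; infer_instance
  have : Module.Finite R (↥B ⧸ LinearMap.ker g) :=
    Module.Finite.equiv (g.quotKerEquivOfSurjective h.surj).symm
  exact Module.Finite.of_submodule_quotient (LinearMap.ker g)

theorem FiltP.finite {Cl : ModuleCat.{0} R → Prop} {M : ModuleCat.{0} R}
    (h : ∀ D, Cl D → Module.Finite R ↥D) (hM : FiltP Cl M) : Module.Finite R ↥M := by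
  induction hM with
  | zero h => infer_instance
  | cons _ hD hs ih => exact hs.finite ih (h _ hD)

theorem ses_section {M : ModuleCat.{0} R} {A B : Submodule R ↥M} (h : A ≤ B) {D : ModuleCat.{0} R}
    (e : subquot R A B ≃ₗ[R] ↥D) :
    Ses (A := ModuleCat.of R ↥A) (B := ModuleCat.of R ↥B) (C := D) (Submodule.inclusion h)
      (e.toLinearMap ∘ₗ (Submodule.comap B.subtype A).mkQ) where
  inj := Submodule.inclusion_injective h
  surj := e.surjective.comp (Submodule.mkQ_surjective _)
  ex := by
    intro y
    simp only [LinearMap.comp_apply, LinearEquiv.coe_coe, LinearEquiv.map_eq_zero_iff,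
      Submodule.mkQ_apply, Submodule.Quotient.mk_eq_zero, Submodule.mem_comap, Set.mem_range]
    constructor
    · intro hy; exact ⟨⟨y.1, hy⟩, rfl⟩
    · rintro ⟨a, rfl⟩; exact a.2

theorem HasFiltrationWithSections.filtP {M : ModuleCat.{0} R} {n : ℕ}
    {f : Fin (n + 1) → Submodule R ↥M} {D : Fin n → ModuleCat.{0} R}
    (h : HasFiltrationWithSections R M n f D) (j : Fin (n + 1)) :
    FiltP (fun X => ∃ i : Fin n, i.castSucc < j ∧ X = D i) (ModuleCat.of R ↥(f j)) := by
  obtain ⟨hm, h0, -, hs⟩ := h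
  induction j using Fin.induction with
  | zero =>
    refine .zero ?_
    show Subsingleton ↥(f 0)
    rw [h0]; infer_instance
  | succ j ih =>
    obtain ⟨e⟩ := hs j
    refine .cons (ih.mono ?_) ⟨j, Fin.castSucc_lt_succ, rfl⟩
      (ses_section (hm (Fin.castSucc_lt_succ (i := j)).le) e)
    rintro _ ⟨i, hi, rfl⟩
    exact ⟨i, hi.trans Fin.castSucc_lt_succ, rfl⟩

theorem HasFiltrationWithSections.filtP_top {M : ModuleCat.{0} R} {n : ℕ}
    {f : Fin (n + 1) → Submodule R ↥M} {D : Fin n → ModuleCat.{0} R}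
    (h : HasFiltrationWithSections R M n f D) :
    FiltP (fun X => ∃ i : Fin n, X = D i) M := by
  have := h.filtP (Fin.last n)
  refine (this.mono (C2 := fun X => ∃ i : Fin n, X = D i) ?_).iso (N := M) ?_
  · rintro _ ⟨i, -, rfl⟩; exact ⟨i, rfl⟩
  · exact (LinearEquiv.ofEq _ _ h.2.2.1).trans Submodule.topEquiv

theorem FiltP.hasFiltration {Λ : Type} {Dl : Λ → ModuleCat.{0} R} {M : ModuleCat.{0} R}
    (hM : FiltP (fun X => ∃ l, X = Dl l) M) :
    ∃ (n : ℕ) (f : Fin (n + 1) → Submodule R ↥M) (g : Fin n → Λ),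
      HasFiltrationWithSections R M n f (fun i => Dl (g i)) := by
  induction hM with
  | @zero M h =>
    refine ⟨0, fun _ => ⊥, Fin.elim0, fun _ _ _ => le_rfl, rfl, Subsingleton.elim _ _, ?_⟩
    intro i; exact i.elim0
  | @cons A M D F G hA hD hs ih =>
    obtain ⟨l, rfl⟩ := hD
    obtain ⟨n, f, g, hm, h0, hl, hsec⟩ := ih
    refine ⟨n + 1, Fin.snoc (α := fun _ => Submodule R ↥M) (fun i => (f i).map F) ⊤,
      Fin.snoc (α := fun _ => Λ) g l, ?_, ?_, ?_, ?_⟩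
    · intro i j hij
      induction j using Fin.lastCases with
      | last => rw [Fin.snoc_last]; exact le_top
      | cast j =>
        induction i using Fin.lastCases with
        | last => 
          exfalso
          exact absurd hij (not_le.2 (Fin.castSucc_lt_last j))
        | cast i =>
          rw [Fin.snoc_castSucc, Fin.snoc_castSucc]
          exact Submodule.map_mono (hm (Fin.castSucc_le_castSucc_iff.1 hij))
    · have : (0 : Fin (n + 1 + 1)) = Fin.castSucc 0 := rfl
      rw [this, Fin.snoc_castSucc, h0, Submodule.map_bot]
    · rw [Fin.snoc_last]
    · intro i
      induction i using Fin.lastCases with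
      | last =>
        rw [Fin.snoc_castSucc, Fin.succ_last, Fin.snoc_last, hl, Submodule.map_top]
        beta_reduce
        rw [Fin.snoc_last]
        let q : ↥(⊤ : Submodule R ↥M) →ₗ[R] ↥(Dl l) := G ∘ₗ (Submodule.subtype _)
        have hq : Function.Surjective q := fun y => by
          obtain ⟨x, hx⟩ := hs.surj y
          exact ⟨⟨x, trivial⟩, hx⟩
        refine ⟨(Submodule.quotEquivOfEq _ _ ?_).trans (q.quotKerEquivOfSurjective hq)⟩
        ext x
        exact (hs.ex x.1).symm
      | cast i =>
        obtain ⟨e⟩ := hsec i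
        rw [Fin.snoc_castSucc, Fin.succ_castSucc, Fin.snoc_castSucc]
        beta_reduce
        rw [Fin.snoc_castSucc]
        refine ⟨(Submodule.Quotient.equiv _ _
          (Submodule.equivMapOfInjective F hs.inj (f i.succ)) ?_).symm.trans e⟩
        ext x
        simp only [Submodule.mem_map, Submodule.mem_comap]
        constructor
        · rintro ⟨y, hy, rfl⟩
          exact ⟨y.1, hy, rfl⟩
        · rintro ⟨y, hy, hxy⟩
          exact ⟨⟨y, hm (Fin.castSucc_lt_succ (i := i)).le hy⟩, hy, Subtype.ext hxy⟩

end Filt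
end QHPaper


namespace QHPaper
section CFsec
variable {R : Type} [Ring R] {Λ : Type} [Fintype Λ] [PartialOrder Λ] (Q : QHData R Λ)

/-- `L μ` is a composition factor of `M`, in terms of maps from the projective cover. -/
def CF (μ : Λ) (M : ModuleCat.{0} R) : Prop := ∃ h : ↥(Q.P μ) →ₗ[R] ↥M, h ≠ 0

variable {Q}

theorem exists_pi (μ : Λ) : ∃ π : ↥(Q.P μ) →ₗ[R] ↥(Q.L μ), Function.Surjective π ∧
    IsCoatom (LinearMap.ker π) ∧
    ∀ (M : ModuleCat.{0} R) (h : ↥(Q.P μ) →ₗ[R] ↥M), h ≠ 0 →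
      LinearMap.ker h ≤ LinearMap.ker π := by
  obtain ⟨-, π, hs, hsup⟩ := Q.projCover μ
  have := Q.simpleL μ
  have hco : IsCoatom (LinearMap.ker π) := by
    rw [← isSimpleModule_iff_isCoatom]
    exact IsSimpleModule.congr (π.quotKerEquivOfSurjective hs)
  refine ⟨π, hs, hco, fun M h hh => ?_⟩
  by_contra hle
  have h2 : LinearMap.ker h ⊔ LinearMap.ker π = ⊤ := by
    apply hco.2
    exact lt_of_le_of_ne le_sup_right (fun e => hle (by rw [e]; exact le_sup_left))
  exact hh (LinearMap.ker_eq_top.1 (hsup _ h2))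

theorem lift_P {μ : Λ} {B C : ModuleCat.{0} R} (g : ↥B →ₗ[R] ↥C) (hg : Function.Surjective g)
    (u : ↥(Q.P μ) →ₗ[R] ↥C) : ∃ v : ↥(Q.P μ) →ₗ[R] ↥B, g ∘ₗ v = u := by
  have := (Q.projCover μ).1
  exact Module.projective_lifting_property g u hg

theorem CF.of_inj {μ : Λ} {A B : ModuleCat.{0} R} (h : CF Q μ A) (f : ↥A →ₗ[R] ↥B)
    (hf : Function.Injective f) : CF Q μ B := by
  obtain ⟨u, hu⟩ := h
  refine ⟨f ∘ₗ u, fun h => hu ?_⟩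
  ext x
  apply hf
  rw [LinearMap.zero_apply, map_zero]
  exact LinearMap.congr_fun h x

theorem CF.of_surj {μ : Λ} {B C : ModuleCat.{0} R} (h : CF Q μ C) (g : ↥B →ₗ[R] ↥C)
    (hg : Function.Surjective g) : CF Q μ B := by
  obtain ⟨u, hu⟩ := h
  obtain ⟨v, rfl⟩ := lift_P g hg u
  refine ⟨v, ?_⟩
  rintro rfl
  exact hu (LinearMap.comp_zero g)

theorem CF.iso {μ : Λ} {B C : ModuleCat.{0} R} (h : CF Q μ C) (e : ↥B ≃ₗ[R] ↥C) : CF Q μ B :=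
  h.of_surj e.toLinearMap e.surjective

theorem Ses.cf {μ : Λ} {A B C : ModuleCat.{0} R} {f : ↥A →ₗ[R] ↥B} {g : ↥B →ₗ[R] ↥C}
    (hs : Ses f g) (h : CF Q μ B) : CF Q μ A ∨ CF Q μ C := by
  obtain ⟨u, hu⟩ := h
  by_cases hg : g ∘ₗ u = 0
  · left
    by_contra hA
    apply hu
    have hr : ∀ x, u x ∈ LinearMap.range f := fun x =>
      (hs.ex _).1 (LinearMap.congr_fun hg x)
    let e := LinearEquiv.ofInjective f hs.inj
    let v : ↥(Q.P μ) →ₗ[R] ↥A := e.symm.toLinearMap ∘ₗ u.codRestrict _ hr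
    have hv : v = 0 := by
      by_contra h; exact hA ⟨v, h⟩
    ext x
    have h1 : e (v x) = ⟨u x, hr x⟩ := by
      simp only [v, LinearMap.comp_apply, LinearEquiv.coe_coe, LinearEquiv.apply_symm_apply]
      rfl
    rw [hv] at h1
    simpa using (congrArg Subtype.val h1).symm
  · right; exact ⟨_, hg⟩

theorem CF.comp {μ : Λ} {M : ModuleCat.{0} R} (h : CF Q μ M) : IsCompFactor R (Q.L μ) M := by
  obtain ⟨h, hh⟩ := h
  obtain ⟨π, hs, hco, hker⟩ := exists_pi (Q := Q) μ
  have hk := hker M h hh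
  have hAB : (LinearMap.ker π).map h ≤ LinearMap.range h := LinearMap.map_le_range
  refine ⟨(LinearMap.ker π).map h, LinearMap.range h, hAB, ?_⟩
  let q : ↥(Q.P μ) →ₗ[R] subquot R ((LinearMap.ker π).map h) (LinearMap.range h) :=
    (Submodule.mkQ _) ∘ₗ h.rangeRestrict
  have hq : Function.Surjective q :=
    (Submodule.mkQ_surjective _).comp h.surjective_rangeRestrict
  have hkq : LinearMap.ker q = LinearMap.ker π := by
    ext x
    simp only [q, LinearMap.mem_ker, LinearMap.comp_apply, Submodule.mkQ_apply,
      Submodule.Quotient.mk_eq_zero, Submodule.mem_comap, Submodule.mem_map]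
    constructor
    · rintro ⟨y, hy, hxy⟩
      have h1 : x - y ∈ LinearMap.ker h := by
        rw [LinearMap.mem_ker, map_sub, hxy]; simp
      have h2 := hk h1
      rw [LinearMap.mem_ker, map_sub, hy, sub_zero] at h2
      exact h2
    · intro hx; exact ⟨x, hx, rfl⟩
  exact ⟨((q.quotKerEquivOfSurjective hq).symm.trans (Submodule.quotEquivOfEq _ _ hkq)).trans
    (π.quotKerEquivOfSurjective hs)⟩

theorem cf_of_comp {μ : Λ} {M : ModuleCat.{0} R} (h : IsCompFactor R (Q.L μ) M) : CF Q μ M := by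
  obtain ⟨A, B, hAB, ⟨e⟩⟩ := h
  obtain ⟨π, hs, -, -⟩ := exists_pi (Q := Q) μ
  have := (Q.simpleL μ).nontrivial
  have h0 : CF Q μ (Q.L μ) := ⟨π, fun h => by
    obtain ⟨x, hx⟩ := exists_ne (0 : ↥(Q.L μ))
    obtain ⟨y, rfl⟩ := hs x
    exact hx (by rw [h]; rfl)⟩
  have h1 := h0.of_surj _ (ses_section hAB e).surj
  exact h1.of_inj (B := M) B.subtype Subtype.val_injective

theorem cf_L {μ l : Λ} (h : CF Q μ (Q.L l)) : μ = l := by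
  obtain ⟨h, hh⟩ := h
  have := Q.simpleL l
  obtain ⟨π, hs, hco, hker⟩ := exists_pi (Q := Q) μ
  have hsur := LinearMap.surjective_of_ne_zero hh
  have h1 := hker _ h hh
  have hc : IsCoatom (LinearMap.ker h) := by
    rw [← isSimpleModule_iff_isCoatom]
    exact IsSimpleModule.congr (h.quotKerEquivOfSurjective hsur)
  have h2 : LinearMap.ker h = LinearMap.ker π := by
    rcases hc.le_iff.1 h1 with h | h
    · exact absurd h hco.1
    · exact h.symm
  by_contra hne
  exact (Q.nonisoL μ l hne).elim (((π.quotKerEquivOfSurjective hs).symm.trans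
    (Submodule.quotEquivOfEq _ _ h2.symm)).trans (h.quotKerEquivOfSurjective hsur))

theorem cf_std {μ l : Λ} (h : CF Q μ (Q.std l)) : μ ≤ l := by
  obtain ⟨K, ⟨e⟩, hK, -⟩ := Q.stdSpec l
  exact hK _ (CF.comp (h.iso (B := ModuleCat.of R (↥(Q.P l) ⧸ K)) e.symm))

theorem std_nontrivial (l : Λ) : Nontrivial ↥(Q.std l) := by
  obtain ⟨n, f, hm, h0, hl, hs, hc⟩ := Q.multOne l
  by_contra hn
  rw [not_nontrivial_iff_subsingleton] at hn
  have : IsEmpty (Fin n) := by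
    refine ⟨fun i => ?_⟩
    have h1 := (hs i).nontrivial
    have h2 : Subsingleton ↥(f i.succ) := inferInstance
    have h3 : Subsingleton (subquot R (f i.castSucc) (f i.succ)) :=
      (Submodule.mkQ_surjective (Submodule.comap (f i.succ).subtype (f i.castSucc))).subsingleton
    exact not_subsingleton _ h3
  rw [Nat.card_of_isEmpty] at hc
  exact zero_ne_one hc

theorem exists_p (l : Λ) : ∃ p : ↥(Q.P l) →ₗ[R] ↥(Q.std l),
    Function.Surjective p ∧ p ≠ 0 := by
  obtain ⟨K, ⟨e⟩, -, -⟩ := Q.stdSpec l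
  let p : ↥(Q.P l) →ₗ[R] ↥(Q.std l) := e.symm.toLinearMap ∘ₗ K.mkQ
  have hp : Function.Surjective p := e.symm.surjective.comp K.mkQ_surjective
  refine ⟨p, hp, ?_⟩
  intro h
  have := std_nontrivial (Q := Q) l
  obtain ⟨x, hx⟩ := exists_ne (0 : ↥(Q.std l))
  obtain ⟨y, rfl⟩ := hp x
  exact hx (by rw [h]; rfl)

theorem cf_std_of_hom {l : Λ} {M : ModuleCat.{0} R} {u : ↥(Q.std l) →ₗ[R] ↥M} (hu : u ≠ 0) :
    CF Q l M := by
  obtain ⟨p, hp, -⟩ := exists_p (Q := Q) l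
  refine ⟨u ∘ₗ p, fun h => hu ?_⟩
  ext x
  obtain ⟨y, rfl⟩ := hp x
  exact LinearMap.congr_fun h y

theorem cf_simple {μ : Λ} {M : ModuleCat.{0} R} (hM : IsSimpleModule R ↥M) (h : CF Q μ M) :
    Nonempty (↥M ≃ₗ[R] ↥(Q.L μ)) := by
  obtain ⟨ν, ⟨e⟩⟩ := Q.fullL M hM
  obtain rfl := cf_L (h.iso e.symm)
  exact ⟨e⟩

/-- the head of `Δ` and its radical. -/
theorem exists_q (l : Λ) : ∃ q : ↥(Q.std l) →ₗ[R] ↥(Q.L l), Function.Surjective q ∧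
    ∀ μ, CF Q μ (ModuleCat.of R ↥(LinearMap.ker q)) → μ < l := by
  obtain ⟨p, hp, hp0⟩ := exists_p (Q := Q) l
  obtain ⟨π, hs, hco, hker⟩ := exists_pi (Q := Q) l
  let q : ↥(Q.std l) →ₗ[R] ↥(Q.L l) :=
    ((LinearMap.ker p).liftQ π (hker _ p hp0)) ∘ₗ (p.quotKerEquivOfSurjective hp).symm.toLinearMap
  have hqp : ∀ x, q (p x) = π x := by
    intro x
    have : (p.quotKerEquivOfSurjective hp).symm (p x) = (LinearMap.ker p).mkQ x := by
      rw [LinearEquiv.symm_apply_eq]; rfl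
    simp only [q, LinearMap.comp_apply, LinearEquiv.coe_coe, this]
    simp
  have hq : Function.Surjective q := fun y => by
    obtain ⟨x, rfl⟩ := hs y
    exact ⟨p x, hqp x⟩
  refine ⟨q, hq, ?_⟩
  obtain ⟨n, f, hm, h0, hl, hsim, hc⟩ := Q.multOne l
  obtain ⟨i0, hi0⟩ := Nat.card_eq_one_iff_exists.1 hc
  have jump : ∀ h : ↥(Q.P l) →ₗ[R] ↥(Q.std l), h ≠ 0 →
      LinearMap.range h ≤ f i0.1.succ ∧ ¬ LinearMap.range h ≤ f i0.1.castSucc := by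
    intro h hh
    have key : ∃ i : Fin n, LinearMap.range h ≤ f i.succ ∧ ¬ LinearMap.range h ≤ f i.castSucc := by
      by_contra hcon
      push Not at hcon
      have : ∀ j : Fin (n + 1), ¬ LinearMap.range h ≤ f j := by
        intro j
        induction j using Fin.induction with
        | zero =>
          rw [h0, le_bot_iff, LinearMap.range_eq_bot]; exact hh
        | succ j ih => exact fun hj => ih (hcon j hj)
      exact this (Fin.last n) (by rw [hl]; exact le_top)
    obtain ⟨i, h1, h2⟩ := key
    have hcf : CF Q l (ModuleCat.of R (subquot R (f i.castSucc) (f i.succ))) := by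
      refine ⟨(Submodule.mkQ _) ∘ₗ h.codRestrict (f i.succ) (fun x => h1 ⟨x, rfl⟩), ?_⟩
      intro hz
      apply h2
      rintro _ ⟨x, rfl⟩
      have := LinearMap.congr_fun hz x
      simp only [LinearMap.comp_apply, Submodule.mkQ_apply, LinearMap.zero_apply] at this
      rw [Submodule.Quotient.mk_eq_zero] at this
      exact this
    have hiso := cf_simple (hsim i) hcf
    have : (⟨i, hiso⟩ : {i : Fin n // Nonempty ((subquot R (f i.castSucc) (f i.succ)) ≃ₗ[R]
      ↥(Q.L l))}) = i0 := hi0 _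
    rw [← this]
    exact ⟨h1, h2⟩
  have htop : f i0.1.succ = ⊤ := by
    rw [eq_top_iff, ← LinearMap.range_eq_top.2 hp]
    exact (jump p hp0).1
  have hno : ¬ CF Q l (ModuleCat.of R ↥(f i0.1.castSucc)) := by
    rintro ⟨u, hu⟩
    have hne : (f i0.1.castSucc).subtype ∘ₗ u ≠ 0 := by
      intro h
      apply hu
      ext x
      exact LinearMap.congr_fun h x
    apply (jump _ hne).2
    rintro _ ⟨x, rfl⟩
    exact (u x).2
  have hle : f i0.1.castSucc ≤ LinearMap.ker q := by
    by_contra hcon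
    apply hno
    have hne : q ∘ₗ (f i0.1.castSucc).subtype ≠ 0 := by
      intro h
      apply hcon
      intro x hx
      exact LinearMap.congr_fun h ⟨x, hx⟩
    have := Q.simpleL l
    have hsur := LinearMap.surjective_of_ne_zero hne
    have h0 : CF Q l (Q.L l) := ⟨π, fun h => hco.1 (LinearMap.ker_eq_top.2 h)⟩
    exact h0.of_surj (B := ModuleCat.of R ↥(f i0.1.castSucc)) _ hsur
  have hco2 : IsCoatom (f i0.1.castSucc) := by
    rw [← isSimpleModule_iff_isCoatom]
    have := hsim i0.1
    let a : ↥(Q.std l) →ₗ[R] subquot R (f i0.1.castSucc) (f i0.1.succ) :=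
      Submodule.mkQ _ ∘ₗ LinearMap.codRestrict (f i0.1.succ) LinearMap.id
        (fun x => by rw [htop]; trivial)
    have ha : Function.Surjective a := by
      refine (Submodule.mkQ_surjective _).comp ?_
      intro x; exact ⟨x.1, rfl⟩
    have hka : LinearMap.ker a = f i0.1.castSucc := by
      ext x
      simp only [a, LinearMap.mem_ker, LinearMap.comp_apply, Submodule.mkQ_apply,
        Submodule.Quotient.mk_eq_zero, Submodule.mem_comap]
      rfl
    exact IsSimpleModule.congr ((Submodule.quotEquivOfEq _ _ hka.symm).trans
      (a.quotKerEquivOfSurjective ha))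
  have hkq : LinearMap.ker q = f i0.1.castSucc := by
    rcases hco2.le_iff.1 hle with h | h
    · exfalso
      rw [LinearMap.ker_eq_top] at h
      apply hco.1
      rw [LinearMap.ker_eq_top]
      ext x
      rw [← hqp, h]
      rfl
    · exact h
  intro μ hμ
  have h1 : μ ≤ l := cf_std (hμ.of_inj (B := Q.std l) (Submodule.subtype _) Subtype.val_injective)
  refine lt_of_le_of_ne h1 ?_
  rintro rfl
  apply hno
  rw [hkq] at hμ
  exact hμ

/-- The kernel of `P → Δ` is filtered by larger standards. -/
theorem exists_projSes (l : Λ) : ∃ (K : ModuleCat.{0} R) (i : ↥K →ₗ[R] ↥(Q.P l))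
    (p : ↥(Q.P l) →ₗ[R] ↥(Q.std l)), Ses i p ∧
    FiltP (fun X => ∃ ν, l < ν ∧ X = Q.std ν) K := by
  obtain ⟨n, f, g, hF, hle, hc⟩ := Q.projFilt l
  obtain ⟨i0, hi0⟩ := Nat.card_eq_one_iff_exists.1 hc
  obtain ⟨m, rfl⟩ : ∃ m, n = m + 1 := by
    cases n with
    | zero => exact i0.1.elim0
    | succ m => exact ⟨m, rfl⟩
  obtain ⟨e⟩ := hF.2.2.2 (Fin.last m)
  have hs := ses_section (hF.1 (Fin.castSucc_lt_succ (i := Fin.last m)).le) e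
  have htop : f (Fin.last m).succ = ⊤ := hF.2.2.1
  let e1 : ↥(f (Fin.last m).succ) ≃ₗ[R] ↥(Q.P l) :=
    (LinearEquiv.ofEq _ _ htop).trans Submodule.topEquiv
  have hs2 : Ses (A := ModuleCat.of R ↥(f (Fin.last m).castSucc)) (B := Q.P l)
      (C := Q.std (g (Fin.last m))) (e1.toLinearMap ∘ₗ Submodule.inclusion
        (hF.1 (Fin.castSucc_lt_succ (i := Fin.last m)).le))
      ((e.toLinearMap ∘ₗ (Submodule.comap (f (Fin.last m).succ).subtype
        (f (Fin.last m).castSucc)).mkQ) ∘ₗ e1.symm.toLinearMap) := by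
    refine ⟨e1.injective.comp hs.inj, hs.surj.comp e1.symm.surjective, ?_⟩
    intro y
    refine (hs.ex (e1.symm y)).trans ?_
    constructor
    · rintro ⟨a, ha⟩
      exact ⟨a, by rw [LinearMap.comp_apply, ha]; simp⟩
    · rintro ⟨a, ha⟩
      exact ⟨a, by rw [← ha]; simp⟩
  have hg : g (Fin.last m) = l := by
    obtain ⟨q, hq, -⟩ := exists_q (Q := Q) (g (Fin.last m))
    have := (Q.simpleL (g (Fin.last m))).nontrivial
    symm
    refine cf_L (Q := Q) ⟨q ∘ₗ ((e.toLinearMap ∘ₗ (Submodule.comap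
      (f (Fin.last m).succ).subtype (f (Fin.last m).castSucc)).mkQ) ∘ₗ e1.symm.toLinearMap),
      fun h => ?_⟩
    · obtain ⟨x, hx⟩ := exists_ne (0 : ↥(Q.L (g (Fin.last m))))
      obtain ⟨y, hy⟩ := (hq.comp hs2.surj) x
      exact hx (hy.symm.trans (LinearMap.congr_fun h y))
  have hfil := hF.filtP (Fin.last m).castSucc
  have hfil2 : FiltP (fun X => ∃ ν, l < ν ∧ X = Q.std ν)
      (ModuleCat.of R ↥(f (Fin.last m).castSucc)) := by
    refine hfil.mono ?_
    rintro _ ⟨i, hi, rfl⟩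
    refine ⟨g i, lt_of_le_of_ne (hle i) ?_, rfl⟩
    intro h
    have a1 := hi0 ⟨i, h.symm⟩
    have a2 := hi0 ⟨Fin.last m, hg⟩
    rw [← a2] at a1
    have a3 : i = Fin.last m := congrArg Subtype.val a1
    rw [a3] at hi
    exact lt_irrefl _ hi
  have hs3 : ∃ (i : ↥(ModuleCat.of R ↥(f (Fin.last m).castSucc)) →ₗ[R] ↥(Q.P l))
      (p : ↥(Q.P l) →ₗ[R] ↥(Q.std (g (Fin.last m)))), Ses i p := ⟨_, _, hs2⟩
  rw [hg] at hs3
  obtain ⟨i, p, h3⟩ := hs3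
  exact ⟨_, i, p, h3, hfil2⟩

end CFsec
end QHPaper


namespace QHPaper
section Costd
variable {R : Type} [Ring R] {Λ : Type} [Fintype Λ] [PartialOrder Λ] {Q : QHData R Λ}

theorem exists_costd (l : Λ) : ∃ (ι : ↥(Q.L l) →ₗ[R] ↥(Q.costd l))
    (j : ↥(Q.costd l) →ₗ[R] ↥(Q.I l)), Function.Injective ι ∧ Function.Injective j ∧
    (∀ N : Submodule R ↥(Q.I l), N ⊓ LinearMap.range (j ∘ₗ ι) = ⊥ → N = ⊥) ∧
    (∀ μ, CF Q μ (Q.costd l) → μ ≤ l) ∧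
    (∀ (A : ModuleCat.{0} R) (u : ↥A →ₗ[R] ↥(Q.I l)), (∀ μ, CF Q μ A → μ ≤ l) →
      LinearMap.range u ≤ LinearMap.range j) := by
  obtain ⟨V, ⟨e⟩, hw, hmax⟩ := Q.costdSpec l
  obtain ⟨-, a, ha, hess⟩ := Q.injHull l
  have key : ∀ (A : ModuleCat.{0} R) (u : ↥A →ₗ[R] ↥(Q.I l)), (∀ μ, CF Q μ A → μ ≤ l) →
      LinearMap.range u ≤ V := by
    intro A u hA
    apply hmax
    intro μ hμ
    exact hA μ ((cf_of_comp hμ).of_surj (B := A) u.rangeRestrict u.surjective_rangeRestrict)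
  have haV := key (Q.L l) a (fun μ h => (cf_L h).le)
  let ι : ↥(Q.L l) →ₗ[R] ↥(Q.costd l) :=
    e.symm.toLinearMap ∘ₗ a.codRestrict V (fun x => haV ⟨x, rfl⟩)
  let j : ↥(Q.costd l) →ₗ[R] ↥(Q.I l) := V.subtype ∘ₗ e.toLinearMap
  have hji : j ∘ₗ ι = a := by ext x; simp [j, ι]
  have hrj : LinearMap.range j = V := by
    rw [LinearMap.range_comp_of_range_eq_top _ (LinearEquiv.range e)]
    simp
  refine ⟨ι, j, ?_, ?_, ?_, ?_, ?_⟩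
  · have : Function.Injective (j ∘ₗ ι) := by rw [hji]; exact ha
    rw [LinearMap.coe_comp] at this
    exact this.of_comp
  · exact Subtype.val_injective.comp e.injective
  · rw [hji]; exact hess
  · intro μ h
    exact hw μ (CF.comp (h.iso (B := ModuleCat.of R ↥V) e.symm))
  · rw [hrj]; exact key

theorem cf_costd {μ l : Λ} (h : CF Q μ (Q.costd l)) : μ ≤ l := by
  obtain ⟨ι, j, _, _, _, h2, _⟩ := exists_costd (Q := Q) l
  exact h2 μ h

theorem ess_I (l : Λ) : ∃ (a : ↥(Q.L l) →ₗ[R] ↥(Q.I l)), Function.Injective a ∧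
    ∀ (M : ModuleCat.{0} R) (u : ↥(Q.I l) →ₗ[R] ↥M), Function.Injective (u ∘ₗ a) →
    Function.Injective u := by
  obtain ⟨-, a, ha, hess⟩ := Q.injHull l
  refine ⟨a, ha, fun M u hu => ?_⟩
  rw [← LinearMap.ker_eq_bot]
  apply hess
  rw [eq_bot_iff]
  rintro _ ⟨hx, ⟨y, rfl⟩⟩
  have : y = 0 := hu (by rw [map_zero]; exact hx)
  rw [this, map_zero]; exact Submodule.zero_mem _

theorem ess_costd (l : Λ) : ∃ (a : ↥(Q.L l) →ₗ[R] ↥(Q.costd l)), Function.Injective a ∧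
    ∀ (M : ModuleCat.{0} R) (u : ↥(Q.costd l) →ₗ[R] ↥M), Function.Injective (u ∘ₗ a) →
    Function.Injective u := by
  obtain ⟨ι, j, hι, hj, hess, -, -⟩ := exists_costd (Q := Q) l
  refine ⟨ι, hι, fun M u hu => ?_⟩
  have h1 : (LinearMap.ker u).map j = ⊥ := by
    apply hess
    rw [eq_bot_iff]
    rintro _ ⟨⟨x, hx, hxy⟩, ⟨y, rfl⟩⟩
    have hx2 : x = ι y := hj hxy
    subst hx2
    have : y = 0 := hu (by rw [map_zero]; exact hx)
    rw [this, map_zero]; exact Submodule.zero_mem _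
  rw [← LinearMap.ker_eq_bot]
  rw [eq_bot_iff]
  intro x hx
  have h2 : j x ∈ (LinearMap.ker u).map j := ⟨x, hx, rfl⟩
  rw [h1, Submodule.mem_bot] at h2
  exact hj (by rw [h2, map_zero])

theorem ez_costd_one {l : Λ} {A : ModuleCat.{0} R} (hA : ∀ μ, CF Q μ A → μ ≤ l) :
    EZ A (Q.costd l) 1 := by
  obtain ⟨ι, j, hι, hj, -, hw, hmax⟩ := exists_costd (Q := Q) l
  have hs := ses_coker (A := Q.costd l) (M := Q.I l) j hj
  refine hs.cov_left ?_ (ez_inj (Q.injHull l).1 0)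
  rw [ez_zero_iff]
  intro u
  by_contra hu
  -- preimage of the range of `u`
  let B : Submodule R ↥(Q.I l) := (LinearMap.range u).comap (LinearMap.range j).mkQ
  have hB : LinearMap.range B.subtype ≤ LinearMap.range j := by
    apply hmax (ModuleCat.of R ↥B) B.subtype
    intro μ hμ
    let v : ↥B →ₗ[R] ↥(LinearMap.range u) :=
      ((LinearMap.range j).mkQ ∘ₗ B.subtype).codRestrict _ (fun x => x.2)
    have hv : Function.Surjective v := by
      rintro ⟨y, hy⟩
      obtain ⟨x, rfl⟩ := (LinearMap.range j).mkQ_surjective y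
      exact ⟨⟨x, hy⟩, rfl⟩
    have hs2 := ses_ker (M := ModuleCat.of R ↥B) (C := ModuleCat.of R ↥(LinearMap.range u)) v hv
    rcases hs2.cf hμ with h | h
    · let e := LinearEquiv.ofInjective j hj
      let w : ↥(LinearMap.ker v) →ₗ[R] ↥(Q.costd l) := e.symm.toLinearMap ∘ₗ
        (B.subtype ∘ₗ (LinearMap.ker v).subtype).codRestrict (LinearMap.range j) (fun x => by
          have : v x.1 = 0 := x.2
          have h3 : (LinearMap.range j).mkQ x.1.1 = 0 := congrArg Subtype.val this
          simpa using h3)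
      refine hw μ (h.of_inj w (e.symm.injective.comp ?_))
      intro x y hxy
      have h4 := congrArg Subtype.val hxy
      change x.1.1 = y.1.1 at h4
      exact Subtype.ext (Subtype.ext h4)
    · exact hA μ (h.of_surj (B := A) u.rangeRestrict u.surjective_rangeRestrict)
  apply hu
  ext x
  obtain ⟨y, hy⟩ := (LinearMap.range j).mkQ_surjective (u x)
  have hyB : y ∈ B := by
    show (LinearMap.range j).mkQ y ∈ LinearMap.range u
    rw [hy]; exact ⟨x, rfl⟩
  have := hB ⟨⟨y, hyB⟩, rfl⟩
  rw [LinearMap.zero_apply, ← hy]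
  simpa using this

theorem hom_zero_of_filt {P : Λ → Prop} {K M : ModuleCat.{0} R}
    (hK : FiltP (fun X => ∃ ν, P ν ∧ X = Q.std ν) K) (hM : ∀ ν, P ν → ¬ CF Q ν M) :
    EZ K M 0 := by
  refine hK.ez_left ?_
  rintro _ ⟨ν, hν, rfl⟩
  rw [ez_zero_iff]
  intro u
  by_contra hu
  exact hM ν hν (cf_std_of_hom hu)

theorem ez_std_costd (n : ℕ) : ∀ (l m : Λ), EZ (Q.std l) (Q.costd m) (n + 1) := by
  induction n with
  | zero =>
    intro l m
    by_cases h : l < m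
    · exact ez_costd_one (fun μ hμ => (cf_std hμ).trans h.le)
    · obtain ⟨K, i, p, hs, hK⟩ := exists_projSes (Q := Q) l
      refine hs.con_right ?_ (ez_proj (Q.projCover l).1 0)
      refine hom_zero_of_filt hK ?_
      intro ν hν hcf
      exact h (hν.trans_le (cf_costd hcf))
  | succ n ih =>
    intro l m
    obtain ⟨K, i, p, hs, hK⟩ := exists_projSes (Q := Q) l
    refine hs.con_right ?_ (ez_proj (Q.projCover l).1 (n + 1))
    refine hK.ez_left ?_
    rintro _ ⟨ν, hν, rfl⟩
    exact ih ν m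

/-- class of standard modules, costandard modules -/
def StdC (Q : QHData R Λ) : ModuleCat.{0} R → Prop := fun X => ∃ l, X = Q.std l
def CostdC (Q : QHData R Λ) : ModuleCat.{0} R → Prop := fun X => ∃ l, X = Q.costd l

theorem ez_FF {A B : ModuleCat.{0} R} (hA : FiltP (StdC Q) A) (hB : FiltP (CostdC Q) B) (n : ℕ) :
    EZ A B (n + 1) := by
  refine hA.ez_left ?_
  rintro _ ⟨l, rfl⟩
  refine hB.ez_right ?_
  rintro _ ⟨m, rfl⟩
  exact ez_std_costd n l m

/-- Every finitely generated module embeds in a finitely generated injective. -/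
def EnoughInj (R : Type) [Ring R] : Prop := ∀ M : ModuleCat.{0} R, Module.Finite R ↥M →
  ∃ (J : ModuleCat.{0} R) (f : ↥M →ₗ[R] ↥J), Module.Injective R ↥J ∧ Module.Finite R ↥J ∧
    Function.Injective f

variable [IsArtinianRing R]

theorem finite_sub {A B : ModuleCat.{0} R} (f : ↥A →ₗ[R] ↥B) (hf : Function.Injective f)
    (hB : Module.Finite R ↥B) : Module.Finite R ↥A := by
  have : IsNoetherian R ↥B := inferInstance
  exact Module.Finite.of_injective f hf

theorem finite_costd (hE : EnoughInj R) (l : Λ) : Module.Finite R ↥(Q.costd l) := by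
  obtain ⟨a, ha, hess⟩ := ess_I (Q := Q) l
  obtain ⟨ι, j, hι, hj, -, hw, hmax⟩ := exists_costd (Q := Q) l
  obtain ⟨J, f, hJ, hJf, hf⟩ := hE (Q.L l) (Q.finiteL l)
  obtain ⟨u, hu⟩ := hJ.out a ha f
  have h1 : Function.Injective u := hess J u (by
    have : u ∘ₗ a = f := LinearMap.ext hu
    rw [this]; exact hf)
  exact finite_sub (u ∘ₗ j) (h1.comp hj) hJf

end Costd
end QHPaper


namespace QHPaper
section Crit
variable {R : Type} [Ring R] {Λ : Type} [Fintype Λ] [PartialOrder Λ] {Q : QHData R Λ}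
variable [IsArtinianRing R]

theorem exists_soc {M : ModuleCat.{0} R} (hM : Module.Finite R ↥M) (hn : Nontrivial ↥M) :
    ∃ (l : Λ) (a : ↥(Q.L l) →ₗ[R] ↥M), Function.Injective a := by
  obtain ⟨N, hN⟩ := IsAtomic.exists_atom (Submodule R ↥M)
  have h1 : IsSimpleModule R ↥N := isSimpleModule_iff_isAtom.2 hN
  obtain ⟨l, ⟨e⟩⟩ := Q.fullL (ModuleCat.of R ↥N) h1
  exact ⟨l, N.subtype ∘ₗ e.symm.toLinearMap, Subtype.val_injective.comp e.symm.injective⟩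

theorem cf_of_L {l : Λ} {M : ModuleCat.{0} R} (a : ↥(Q.L l) →ₗ[R] ↥M)
    (ha : Function.Injective a) : CF Q l M := by
  obtain ⟨π, hs, hco, -⟩ := exists_pi (Q := Q) l
  have h0 : CF Q l (Q.L l) := ⟨π, fun h => hco.1 (LinearMap.ker_eq_top.2 h)⟩
  exact h0.of_inj a ha

theorem ez_of_weights {l : Λ} {M : ModuleCat.{0} R} (h : ∀ ν, ν ≤ l → EZ (Q.L ν) M 1)
    (W : Type) [AddCommGroup W] [Module R W] (hW : IsFiniteLength R W)
    (hcf : ∀ μ, CF Q μ (ModuleCat.of R W) → μ ≤ l) : EZ (ModuleCat.of R W) M 1 := by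
  induction hW with
  | of_subsingleton =>
    rename_i h
    exact ez_of_subsingleton_left h 1
  | @of_simple_quotient W _ _ N hsim _ ih =>
    have hs := ses_sub (M := ModuleCat.of R W) N
    refine hs.con_mid (ih fun μ hμ => hcf μ (hμ.of_inj _ hs.inj)) ?_
    obtain ⟨ν, ⟨e⟩⟩ := Q.fullL (ModuleCat.of R (W ⧸ N)) hsim
    refine ez_iso_left e (h ν (hcf ν ?_))
    exact CF.of_surj (cf_of_L e.symm.toLinearMap e.symm.injective) _ hs.surj

theorem isFiniteLength_of_finite {M : ModuleCat.{0} R} (hM : Module.Finite R ↥M) :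
    IsFiniteLength R ↥M :=
  isFiniteLength_iff_isNoetherian_isArtinian.2 ⟨inferInstance, inferInstance⟩

theorem crit (hE : EnoughInj R) {M : ModuleCat.{0} R} (hM : Module.Finite R ↥M)
    (h : ∀ μ, EZ (Q.std μ) M 1) : FiltP (CostdC Q) M := by
  obtain ⟨n, hn⟩ : ∃ n : ℕ, Module.length R ↥M = n := by
    have := Module.length_ne_top (R := R) (M := ↥M)
    exact ⟨_, (ENat.natCast_toNat this).symm⟩
  induction n using Nat.strong_induction_on generalizing M with
  | _ n ih =>
  rcases subsingleton_or_nontrivial ↥M with hsub | hnt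
  · exact .zero hsub
  have wf : WellFounded (α := Λ) (· < ·) := (Finite.to_wellFoundedLT).wf
  obtain ⟨l, ⟨a, ha⟩, hmin⟩ := wf.has_min
    {l : Λ | ∃ a : ↥(Q.L l) →ₗ[R] ↥M, Function.Injective a} (exists_soc hM hnt)
  have hL : ∀ ν, ν ≤ l → EZ (Q.L ν) M 1 := by
    intro ν hν
    obtain ⟨q, hq, hw⟩ := exists_q (Q := Q) ν
    refine (ses_ker q hq).con_right ?_ (h ν)
    rw [ez_zero_iff]
    intro u
    by_contra hu
    have hnt2 : Nontrivial ↥(LinearMap.range u) := by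
      rw [Submodule.nontrivial_iff_ne_bot]
      exact fun hb => hu (LinearMap.range_eq_bot.1 hb)
    have hf2 : Module.Finite R ↥(LinearMap.range u) := inferInstance
    obtain ⟨κ, b, hb⟩ := exists_soc (Q := Q) (M := ModuleCat.of R ↥(LinearMap.range u)) hf2 hnt2
    have h1 : CF Q κ (ModuleCat.of R ↥(LinearMap.ker q)) :=
      CF.of_surj (cf_of_L b hb) (LinearMap.rangeRestrict u) (LinearMap.surjective_rangeRestrict u)
    refine hmin κ ⟨(LinearMap.range u).subtype ∘ₗ b, Subtype.val_injective.comp hb⟩ ?_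
    exact (hw κ h1).trans_le hν
  obtain ⟨ι, hι, hess⟩ := ess_costd (Q := Q) l
  have hfin := finite_costd (Q := Q) hE l
  have hs := ses_coker ι hι
  have hW : EZ (ModuleCat.of R (↥(Q.costd l) ⧸ LinearMap.range ι)) M 1 := by
    refine ez_of_weights hL _ (isFiniteLength_of_finite (M := ModuleCat.of R _) ?_) ?_
    · show Module.Finite R (↥(Q.costd l) ⧸ LinearMap.range ι)
      infer_instance
    · intro μ hμ
      exact cf_costd (hμ.of_surj _ hs.surj)
  obtain ⟨v, hv⟩ := hs.extend hW a
  have hvi : Function.Injective v := hess M v (by rw [hv]; exact ha)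
  have hs2 := ses_coker v hvi
  refine FiltP.ext ?_ hs2 (.single ⟨l, rfl⟩)
  have hlen := Module.length_eq_add_of_exact v (LinearMap.range v).mkQ hvi hs2.surj hs2.ex
  have hnt3 : Nontrivial ↥(Q.costd l) := by
    have := (Q.simpleL l).nontrivial
    exact hι.nontrivial
  have hpos := Module.length_pos (R := R) (M := ↥(Q.costd l))
  have hf3 : Module.Finite R ↥(ModuleCat.of R (↥M ⧸ LinearMap.range v)) := by
    show Module.Finite R (↥M ⧸ LinearMap.range v)
    infer_instance
  obtain ⟨m, hm⟩ : ∃ m : ℕ, Module.length R (↥M ⧸ LinearMap.range v) = m := by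
    have := Module.length_ne_top (R := R) (M := ↥(ModuleCat.of R (↥M ⧸ LinearMap.range v)))
    exact ⟨_, (ENat.natCast_toNat this).symm⟩
  obtain ⟨c, hc⟩ : ∃ c : ℕ, Module.length R ↥(Q.costd l) = c := by
    have := Module.length_ne_top (R := R) (M := ↥(Q.costd l))
    exact ⟨_, (ENat.natCast_toNat this).symm⟩
  rw [hc] at hpos hlen
  rw [hm, hn] at hlen
  have h5 : n = c + m := by exact_mod_cast hlen
  have h6 : 0 < c := by exact_mod_cast hpos
  refine ih m (by omega) hf3 ?_ hm
  intro μ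
  exact hs2.cov_right (h μ) (ez_std_costd 1 μ l)

theorem inCostdFilt_iff {M : ModuleCat.{0} R} : InCostdFilt R Q M ↔ FiltP (CostdC Q) M := by
  constructor
  · rintro ⟨n, f, g, h⟩
    refine h.filtP_top.mono ?_
    rintro _ ⟨i, rfl⟩
    exact ⟨g i, rfl⟩
  · intro h; exact FiltP.hasFiltration h

theorem InStdFilt.filtP {M : ModuleCat.{0} R} (h : InStdFilt R Q M) : FiltP (StdC Q) M := by
  obtain ⟨n, f, g, h⟩ := h
  refine h.filtP_top.mono ?_
  rintro _ ⟨i, rfl⟩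
  exact ⟨g i, rfl⟩

end Crit

section Res
variable {R : Type} [Ring R]

/-- resolutions of length `d` by a class -/
def ResLE (Pr : ModuleCat.{0} R → Prop) (M : ModuleCat.{0} R) (d : ℕ) : Prop :=
  ∃ (N : Fin (d + 2) → ModuleCat.{0} R)
    (f : ∀ i : Fin (d + 1), ↥(N i.castSucc) →ₗ[R] ↥(N i.succ)),
    IsExactSeq R d N f ∧ N 0 = M ∧ ∀ i : Fin (d + 1), Pr (N i.succ)

theorem ResLE.ez {Pr : ModuleCat.{0} R → Prop} {A M : ModuleCat.{0} R} {d : ℕ}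
    (hA : ∀ X n, Pr X → EZ A X (n + 1)) (h : ResLE Pr M d) : EZ A M (d + 1) := by
  obtain ⟨N, f, ⟨hi, hsu, hex⟩, rfl, hP⟩ := h
  have key : ∀ (j : Fin (d + 1)) (n : ℕ), n + j.1 = d →
      EZ A (ModuleCat.of R ↥(LinearMap.range (f j))) (n + 1) := by
    intro j
    induction j using Fin.reverseInduction with
    | last =>
      intro n _
      have e : ↥(LinearMap.range (f (Fin.last d))) ≃ₗ[R] ↥(N (Fin.last d).succ) :=
        (LinearEquiv.ofEq _ _ (LinearMap.range_eq_top.2 hsu)).trans Submodule.topEquiv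
      exact ez_iso_right (A := ModuleCat.of R _) e (hA _ _ (hP _))
    | cast j ih =>
      intro n hn
      obtain ⟨m, rfl⟩ : ∃ m, n = m + 1 := ⟨n - 1, by
        have := j.2; simp only [Fin.val_castSucc] at hn; omega⟩
      have h1 := ih m (by simp only [Fin.val_castSucc, Fin.val_succ] at *; omega)
      have hs : Ses (A := ModuleCat.of R ↥(LinearMap.range (f j.castSucc)))
          (B := N j.castSucc.succ) (C := ModuleCat.of R ↥(LinearMap.range (f j.succ)))
          (Submodule.subtype _) (LinearMap.rangeRestrict (f j.succ)) := by
        refine ⟨Subtype.val_injective, LinearMap.surjective_rangeRestrict _, ?_⟩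
        rw [LinearMap.exact_iff, Submodule.range_subtype, hex j, LinearMap.ker_rangeRestrict]
      exact hs.cov_left h1 (hA _ _ (hP _))
  exact ez_iso_right (A := N (Fin.castSucc 0))
    (B := ModuleCat.of R ↥(LinearMap.range (f 0))) (LinearEquiv.ofInjective (f 0) hi) (key 0 d (by simp))

/-- auxiliary -/
def shiftN (M I : ModuleCat.{0} R) (N : ℕ → ModuleCat.{0} R) : ℕ → ModuleCat.{0} R
  | 0 => M
  | 1 => I
  | n + 2 => N (n + 1)

/-- auxiliary -/
def shiftF {M I : ModuleCat.{0} R} {N : ℕ → ModuleCat.{0} R} (a : ↥M →ₗ[R] ↥I)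
    (b : ↥I →ₗ[R] ↥(N 0)) (f : ∀ n, ↥(N n) →ₗ[R] ↥(N (n + 1))) :
    ∀ n, ↥(shiftN M I N n) →ₗ[R] ↥(shiftN M I N (n + 1))
  | 0 => a
  | 1 => f 0 ∘ₗ b
  | n + 2 => f (n + 1)

/-- resolutions indexed by the natural numbers -/
def ResN (Pr : ModuleCat.{0} R → Prop) (M : ModuleCat.{0} R) (d : ℕ) : Prop :=
  ∃ (N : ℕ → ModuleCat.{0} R) (f : ∀ n, ↥(N n) →ₗ[R] ↥(N (n + 1))),
    Function.Injective (f 0) ∧ Function.Surjective (f d) ∧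
    (∀ i, i < d → LinearMap.range (f i) = LinearMap.ker (f (i + 1))) ∧ N 0 = M ∧
    ∀ i, i ≤ d → Pr (N (i + 1))

theorem ResN.resLE {Pr : ModuleCat.{0} R → Prop} {M : ModuleCat.{0} R} {d : ℕ}
    (h : ResN Pr M d) : ResLE Pr M d := by
  obtain ⟨N, f, hi, hs, hex, h0, hP⟩ := h
  exact ⟨fun i => N i.1, fun i => f i.1, ⟨hi, hs, fun i => hex i.1 i.2⟩, h0,
    fun i => hP i.1 (Nat.lt_succ_iff.1 i.2)⟩

theorem ResN.succ {Pr : ModuleCat.{0} R → Prop} {M I M' : ModuleCat.{0} R} {d : ℕ}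
    {a : ↥M →ₗ[R] ↥I} {b : ↥I →ₗ[R] ↥M'} (hab : Ses a b) (hI : Pr I)
    (h : ResN Pr M' d) : ResN Pr M (d + 1) := by
  obtain ⟨N, f, hi, hs, hex, rfl, hP⟩ := h
  refine ⟨shiftN M I N, shiftF a b f, hab.inj, ?_, ?_, rfl, ?_⟩
  · cases d with
    | zero => exact hs.comp hab.surj
    | succ d => exact hs
  · intro i hid
    match i with
    | 0 =>
      show LinearMap.range a = LinearMap.ker (f 0 ∘ₗ b)
      rw [LinearMap.ker_comp, LinearMap.ker_eq_bot.2 hi]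
      exact (LinearMap.exact_iff.1 hab.ex).symm
    | 1 =>
      show LinearMap.range (f 0 ∘ₗ b) = LinearMap.ker (f 1)
      rw [LinearMap.range_comp_of_range_eq_top _ (LinearMap.range_eq_top.2 hab.surj)]
      exact hex 0 (by omega)
    | n + 2 => exact hex (n + 1) (by omega)
  · intro i hid
    match i with
    | 0 => exact hI
    | n + 1 => exact hP n (by omega)

theorem resN_of_ez {Cl Pr : ModuleCat.{0} R → Prop}
    (hez : ∀ A X n, Cl A → Pr X → EZ A X (n + 1))
    (hcrit : ∀ M : ModuleCat.{0} R, Module.Finite R ↥M → (∀ A, Cl A → EZ A M 1) → Pr M)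
    (hemb : ∀ M : ModuleCat.{0} R, Module.Finite R ↥M →
      ∃ (J : ModuleCat.{0} R) (f : ↥M →ₗ[R] ↥J), Pr J ∧ Module.Finite R ↥J ∧
        Function.Injective f) (d : ℕ) :
    ∀ M : ModuleCat.{0} R, Module.Finite R ↥M → (∀ A, Cl A → EZ A M (d + 1)) → ResN Pr M d := by
  induction d with
  | zero =>
    intro M hM h
    have hP := hcrit M hM h
    exact ⟨fun _ => M, fun _ => LinearMap.id, fun _ _ h => h, fun x => ⟨x, rfl⟩,
      fun i hi => absurd hi (Nat.not_lt_zero i), rfl, fun _ _ => hP⟩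
  | succ d ih =>
    intro M hM h
    obtain ⟨J, f, hJ, hJf, hf⟩ := hemb M hM
    have hs := ses_coker f hf
    refine ResN.succ hs hJ (ih _ ?_ ?_)
    · show Module.Finite R (↥J ⧸ LinearMap.range f)
      infer_instance
    · intro A hA
      exact hs.cov_right (hez A J d hA hJ) (h A hA)

theorem injective_of_ez {M : ModuleCat.{0} R} (h : ∀ A : ModuleCat.{0} R, EZ A M 1) :
    Module.Injective R ↥M := by
  refine ⟨fun X Y _ _ _ _ f hf g => ?_⟩
  obtain ⟨v, hv⟩ := (ses_coker (A := ModuleCat.of R X) (M := ModuleCat.of R Y) f hf).extend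
    (h _) g
  exact ⟨v, fun x => LinearMap.congr_fun hv x⟩

theorem injdimLE_iff (hE : EnoughInj R) {M : ModuleCat.{0} R} (hM : Module.Finite R ↥M) (d : ℕ) :
    InjdimLE R M d ↔ ∀ A : ModuleCat.{0} R, EZ A M (d + 1) := by
  constructor
  · intro h A
    exact ResLE.ez (Pr := fun X => Module.Injective R ↥X) (fun X n hX => ez_inj hX n) h
  · intro h
    exact (resN_of_ez (Cl := fun _ => True) (Pr := fun X => Module.Injective R ↥X)
      (fun A X n _ hX => ez_inj hX n) (fun M _ h => injective_of_ez (fun A => h A trivial))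
      hE d M hM (fun A _ => h A)).resLE

theorem gfdLE_iff [IsArtinianRing R] {Λ : Type} [Fintype Λ] [PartialOrder Λ] {Q : QHData R Λ}
    (hE : EnoughInj R) {M : ModuleCat.{0} R} (hM : Module.Finite R ↥M) (d : ℕ) :
    GfdLE R Q M d ↔ ∀ μ, EZ (Q.std μ) M (d + 1) := by
  constructor
  · intro h μ
    refine ResLE.ez (Pr := InCostdFilt R Q) (fun X n hX => ?_) h
    exact ez_FF (.single ⟨μ, rfl⟩) (inCostdFilt_iff.1 hX) n
  · intro h
    refine (resN_of_ez (Cl := StdC Q) (Pr := InCostdFilt R Q) ?_ ?_ ?_ d M hM ?_).resLE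
    · intro A X n hA hX
      exact ez_FF (.single hA) (inCostdFilt_iff.1 hX) n
    · intro M hM h
      exact inCostdFilt_iff.2 (crit hE hM (fun μ => h _ ⟨μ, rfl⟩))
    · intro M hM
      obtain ⟨J, f, hJ, hJf, hf⟩ := hE M hM
      exact ⟨J, f, inCostdFilt_iff.2 (crit hE hJf (fun μ => ez_inj hJ 0)), hJf, hf⟩
    · rintro _ ⟨μ, rfl⟩
      exact h μ

end Res
end QHPaper


namespace QHPaper
section EI

theorem finite_restrict (k : Type) {R : Type} [Field k] [Ring R] [Algebra k R]
    [FiniteDimensional k R] (M : ModuleCat.{0} R) (hM : Module.Finite R ↥M) :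
    Module.Finite k ↥((ModuleCat.restrictScalars (algebraMap k R)).obj M) := by
  let _ : Module k ↥M := Module.compHom ↥M (algebraMap k R)
  have : IsScalarTower k R ↥M := ⟨fun c r x => by
    rw [Algebra.smul_def, mul_smul]; rfl⟩
  exact Module.Finite.trans (R := k) R ↥M

theorem injective_field (k : Type) [Field k] (X : ModuleCat.{0} k) : Injective X :=
  (Module.injective_iff_injective_object _ _).1 (Module.injective_of_isSemisimpleRing k ↥X)

theorem enoughInj (k : Type) {R : Type} [Field k] [Ring R] [Algebra k R]
    [FiniteDimensional k R] : EnoughInj R := by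
  intro M hM
  let f : k →+* R := algebraMap k R
  let adj := ModuleCat.restrictCoextendScalarsAdj.{0} f
  let X := (ModuleCat.restrictScalars.{0} f).obj M
  have hX : Module.Finite k ↥X := finite_restrict k M hM
  have hR : Module.Finite k ↥((ModuleCat.restrictScalars.{0} f).obj (ModuleCat.of R R)) :=
    finite_restrict k (ModuleCat.of R R) inferInstance
  let J := (ModuleCat.coextendScalars.{0, 0, 0} f).obj X
  let u : M ⟶ J := adj.unit.app M
  refine ⟨J, u.hom, ?_, ?_, ?_⟩
  · rw [Module.injective_iff_injective_object]
    refine adj.map_injective X ?_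
    exact injective_field k X
  · let e := ModuleCat.CoextendScalars.equiv f X
    obtain ⟨s, hs⟩ := Module.Finite.fg_top (R := k)
      (M := ↥((ModuleCat.restrictScalars.{0} f).obj (ModuleCat.of R R)) →ₗ[k] ↥X)
    suffices h : Module.Finite R
        (↥((ModuleCat.restrictScalars.{0} f).obj (ModuleCat.of R R)) →ₗ[k] ↥X) from
      Module.Finite.equiv e.symm
    refine ⟨⟨s, ?_⟩⟩
    rw [eq_top_iff]
    intro x _
    have hx : x ∈ Submodule.span k (s : Set _) := by rw [hs]; trivial
    induction hx using Submodule.span_induction with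
    | mem x hx => exact Submodule.subset_span hx
    | zero => exact Submodule.zero_mem _
    | add x y _ _ h1 h2 => exact Submodule.add_mem _ (h1 trivial) (h2 trivial)
    | smul c x _ h =>
      have : c • x = (f c : R) • x := by
        refine LinearMap.ext fun r => ?_
        have h1 : (c • x) r = x (c • r) := (map_smul x c r).symm
        have h2 : c • r = (show R from r) * f c := Algebra.commutes c (show R from r)
        rw [h1, h2]
        rfl
      rw [this]
      exact Submodule.smul_mem _ _ (h trivial)
  · have : Mono u := adj.unit_mono_of_L_faithful M
    exact (ModuleCat.mono_iff_injective u).1 this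

end EI
end QHPaper


namespace QHPaper
section RF

theorem ringel_fin (k : Type) {S : Type} [Field k] [Ring S] [Algebra k S]
    [FiniteDimensional k S] (T : ModuleCat.{0} S) (hT : Module.Finite S ↥T) :
    IsArtinianRing (RingelDualRing S T) ∧ EnoughInj (RingelDualRing S T) ∧
    ∀ X : ModuleCat.{0} S, Module.Finite S ↥X →
      Module.Finite (RingelDualRing S T) (↥T →ₗ[S] ↥X) := by
  have tower : ∀ X : ModuleCat.{0} S, ∀ (c : k) (s : S) (x : ↥X),
      s • (algebraMap k S c • x) = algebraMap k S c • (s • x) := by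
    intro X c s x
    rw [← mul_smul, ← mul_smul, Algebra.commutes]
  let _ : Module k ↥T := Module.compHom ↥T (algebraMap k S)
  have : IsScalarTower k S ↥T := ⟨fun c r x => by
    rw [Algebra.smul_def, mul_smul]; rfl⟩
  have : SMulCommClass S k ↥T := ⟨fun s c x => tower T c s x⟩
  have hTk : Module.Finite k ↥T := Module.Finite.trans (R := k) S ↥T
  have hHom : ∀ X : ModuleCat.{0} S, Module.Finite S ↥X →
      ∃ s : Finset (↥T →ₗ[S] ↥X), ∀ P : (↥T →ₗ[S] ↥X) → Prop, P 0 →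
      (∀ x ∈ s, P x) → (∀ x y, P x → P y → P (x + y)) →
      (∀ (c : k) x y, (∀ t, y t = algebraMap k S c • x t) → P x → P y) → ∀ x, P x := by
    intro X hX
    let _ : Module k ↥X := Module.compHom ↥X (algebraMap k S)
    have : IsScalarTower k S ↥X := ⟨fun c r x => by
      rw [Algebra.smul_def, mul_smul]; rfl⟩
    have : SMulCommClass S k ↥X := ⟨fun s c x => tower X c s x⟩
    have hXk : Module.Finite k ↥X := Module.Finite.trans (R := k) S ↥X
    have hfin : Module.Finite k (↥T →ₗ[S] ↥X) := by
      let j : (↥T →ₗ[S] ↥X) →ₗ[k] (↥T →ₗ[k] ↥X) :=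
        { toFun := fun φ => φ.restrictScalars k
          map_add' := fun _ _ => rfl
          map_smul' := fun _ _ => rfl }
      refine Module.Finite.of_injective j ?_
      intro x y h
      ext t
      exact LinearMap.congr_fun h t
    obtain ⟨s, hs⟩ := Module.Finite.fg_top (R := k) (M := ↥T →ₗ[S] ↥X)
    refine ⟨s, fun P h0 hm ha hsm x => ?_⟩
    have hx : x ∈ Submodule.span k (s : Set _) := by rw [hs]; trivial
    induction hx using Submodule.span_induction with
    | mem x hx => exact hm x hx
    | zero => exact h0
    | add x y _ _ h1 h2 => exact ha x y h1 h2
    | smul c x _ h => exact hsm c x _ (fun t => rfl) h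
  have hEnd : Module.Finite k (Module.End S ↥T) := by
    obtain ⟨s, hs⟩ := hHom T hT
    refine ⟨⟨s, ?_⟩⟩
    rw [eq_top_iff]
    intro x _
    refine hs (fun x => x ∈ Submodule.span k (s : Set (Module.End S ↥T))) (Submodule.zero_mem _)
      (fun x hx => Submodule.subset_span hx) (fun x y => Submodule.add_mem _) ?_ x
    intro c x y hxy hx
    have : y = c • x := LinearMap.ext hxy
    rw [this]
    exact Submodule.smul_mem _ c hx
  have hS' : FiniteDimensional k (RingelDualRing S T) :=
    Module.Finite.equiv (MulOpposite.opLinearEquiv k : Module.End S ↥T ≃ₗ[k] _)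
  refine ⟨IsArtinianRing.of_finite k _, enoughInj k, ?_⟩
  intro X hX
  obtain ⟨s, hs⟩ := hHom X hX
  refine ⟨⟨s, ?_⟩⟩
  rw [eq_top_iff]
  intro x _
  refine hs (fun x => x ∈ Submodule.span (RingelDualRing S T) (s : Set (↥T →ₗ[S] ↥X)))
    (Submodule.zero_mem _)
    (fun x hx => Submodule.subset_span hx) (fun x y => Submodule.add_mem _) ?_ x
  intro c x y hxy hx
  have : y = (MulOpposite.op (algebraMap k (Module.End S ↥T) c) : RingelDualRing S T) • x := by
    ext t
    rw [hxy, ← map_smul]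
    rfl
  rw [this]
  exact Submodule.smul_mem _ _ hx

end RF
end QHPaper


namespace QHPaper
section Ringel
variable {S : Type} [Ring S]

theorem Ses.descend {A B C X : ModuleCat.{0} S} {f : ↥A →ₗ[S] ↥B} {g : ↥B →ₗ[S] ↥C}
    (hs : Ses f g) (h : ↥B →ₗ[S] ↥X) (hf : h ∘ₗ f = 0) : ∃ c : ↥C →ₗ[S] ↥X, c ∘ₗ g = h := by
  have hle : LinearMap.ker g ≤ LinearMap.ker h := by
    intro b hb
    obtain ⟨a, rfl⟩ := (hs.ex b).1 hb
    exact LinearMap.congr_fun hf a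
  refine ⟨((LinearMap.ker g).liftQ h hle) ∘ₗ
    (g.quotKerEquivOfSurjective hs.surj).symm.toLinearMap, ?_⟩
  ext x
  have : (g.quotKerEquivOfSurjective hs.surj).symm (g x) = (LinearMap.ker g).mkQ x := by
    rw [LinearEquiv.symm_apply_eq]; rfl
  simp only [LinearMap.comp_apply, LinearEquiv.coe_coe, this]
  simp

/-- `Hom(T,X)` as a module over the Ringel dual. -/
abbrev FT (T X : ModuleCat.{0} S) : ModuleCat.{0} (RingelDualRing S T) :=
  ModuleCat.of (RingelDualRing S T) (↥T →ₗ[S] ↥X)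

/-- functoriality of `Hom(T,-)` -/
def Fm (T : ModuleCat.{0} S) {X Y : ModuleCat.{0} S} (g : ↥X →ₗ[S] ↥Y) :
    ↥(FT T X) →ₗ[RingelDualRing S T] ↥(FT T Y) where
  toFun φ := g ∘ₗ (show ↥T →ₗ[S] ↥X from φ)
  map_add' φ ψ := LinearMap.comp_add _ _ _
  map_smul' a φ := rfl

variable {T : ModuleCat.{0} S}

theorem F_ses {A B C : ModuleCat.{0} S} {f : ↥A →ₗ[S] ↥B} {g : ↥B →ₗ[S] ↥C}
    (hs : Ses f g) (h : EZ T A 1) : Ses (A := FT T A) (B := FT T B) (C := FT T C)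
      (Fm T f) (Fm T g) := by
  refine ⟨?_, ?_, ?_⟩
  · intro x y hxy
    refine LinearMap.ext fun t => hs.inj ?_
    exact LinearMap.congr_fun hxy t
  · intro u
    obtain ⟨v, hv⟩ := hs.lift h u
    exact ⟨v, hv⟩
  · intro y
    constructor
    · intro hy
      have hr : ∀ t, (show ↥T →ₗ[S] ↥B from y) t ∈ LinearMap.range f := fun t =>
        (hs.ex _).1 (LinearMap.congr_fun hy t)
      let e := LinearEquiv.ofInjective f hs.inj
      refine ⟨e.symm.toLinearMap ∘ₗ LinearMap.codRestrict _ (show ↥T →ₗ[S] ↥B from y) hr, ?_⟩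
      refine LinearMap.ext fun t => ?_
      exact congrArg Subtype.val (e.apply_symm_apply ⟨_, hr t⟩)
    · rintro ⟨x, rfl⟩
      refine LinearMap.ext fun t => ?_
      exact hs.ex.apply_apply_eq_zero _

/-- presentation of a costandard module by a summand of `T` -/
structure Pres (Q : ModuleCat.{0} S → Prop) (T D : ModuleCat.{0} S) where
  X : ModuleCat.{0} S
  K : ModuleCat.{0} S
  inc : ↥X →ₗ[S] ↥T
  ret : ↥T →ₗ[S] ↥X
  hret : ret ∘ₗ inc = LinearMap.id
  i : ↥K →ₗ[S] ↥X
  p : ↥X →ₗ[S] ↥D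
  ses : Ses i p
  hK : FiltP Q K

theorem Pres.proj {Q : ModuleCat.{0} S → Prop} {D : ModuleCat.{0} S} (c : Pres Q T D) :
    Module.Projective (RingelDualRing S T) ↥(FT T c.X) := by
  let e1 : ↥(FT T c.X) →ₗ[RingelDualRing S T] RingelDualRing S T :=
    { toFun := fun φ => MulOpposite.op (c.inc ∘ₗ (show ↥T →ₗ[S] ↥c.X from φ))
      map_add' := fun φ ψ => by
        rw [← MulOpposite.op_add]
        exact congrArg MulOpposite.op (LinearMap.comp_add _ _ _)
      map_smul' := fun a φ => rfl }
  let e2 : RingelDualRing S T →ₗ[RingelDualRing S T] ↥(FT T c.X) :=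
    { toFun := fun a => c.ret ∘ₗ a.unop
      map_add' := fun φ ψ => LinearMap.comp_add _ _ _
      map_smul' := fun a φ => rfl }
  refine Module.Projective.of_split e1 e2 ?_
  refine LinearMap.ext fun φ => ?_
  refine LinearMap.ext fun t => ?_
  exact LinearMap.congr_fun c.hret _

variable {Λ : Type} [Fintype Λ] [PartialOrder Λ] {Q : QHData S Λ}

theorem gen (hT : FiltP (StdC Q) T) (hpres : ∀ l, Nonempty (Pres (CostdC Q) T (Q.costd l)))
    {Y : ModuleCat.{0} S} (hY : FiltP (CostdC Q) Y) : ∀ {W : ModuleCat.{0} S}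
    (h : ↥Y →ₗ[S] ↥W), (∀ t : ↥T →ₗ[S] ↥Y, h ∘ₗ t = 0) → h = 0 := by
  induction hY with
  | zero hsub =>
    intro W h _
    ext x
    rw [Subsingleton.elim x 0, map_zero, map_zero]
  | @cons A Y D f g hA hD hs ih =>
    intro W h hh
    obtain ⟨l, rfl⟩ := hD
    obtain ⟨c⟩ := hpres l
    have hf : h ∘ₗ f = 0 := ih (h ∘ₗ f) (fun t => by
      rw [LinearMap.comp_assoc]; exact hh _)
    obtain ⟨h', rfl⟩ := hs.descend h hf
    obtain ⟨v, hv⟩ := hs.lift (ez_FF hT hA 0) (c.p ∘ₗ c.ret)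
    have h1 := hh v
    rw [LinearMap.comp_assoc, hv] at h1
    have hsur : Function.Surjective (c.p ∘ₗ c.ret) := by
      refine c.ses.surj.comp ?_
      intro x
      exact ⟨c.inc x, LinearMap.congr_fun c.hret x⟩
    have h2 : h' = 0 := by
      ext x
      obtain ⟨t, rfl⟩ := hsur x
      exact LinearMap.congr_fun h1 t
    rw [h2, LinearMap.zero_comp]

theorem full_base (hT : FiltP (StdC Q) T)
    (hpres : ∀ l, Nonempty (Pres (CostdC Q) T (Q.costd l)))
    {I : ModuleCat.{0} S} (l : Λ)
    (χ : ↥(FT T (Q.costd l)) →ₗ[RingelDualRing S T] ↥(FT T I)) :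
    ∃ c : ↥(Q.costd l) →ₗ[S] ↥I, χ = Fm T c := by
  obtain ⟨c⟩ := hpres l
  let ψ0 : ↥T →ₗ[S] ↥I := χ (Fm T c.p c.ret)
  let ψ : ↥c.X →ₗ[S] ↥I := ψ0 ∘ₗ c.inc
  have hψ : ∀ φ : ↥T →ₗ[S] ↥c.X, χ (Fm T c.p φ) = ψ ∘ₗ φ := by
    intro φ
    have h1 : (φ : ↥(FT T c.X)) =
        (MulOpposite.op (c.inc ∘ₗ φ) : RingelDualRing S T) • (c.ret : ↥(FT T c.X)) := by
      refine LinearMap.ext fun t => ?_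
      exact (LinearMap.congr_fun c.hret (φ t)).symm
    rw [h1, map_smul, map_smul]
    refine LinearMap.ext fun t => ?_
    have h2 : c.ret (c.inc (φ t)) = φ t := LinearMap.congr_fun c.hret (φ t)
    show ψ0 (c.inc (φ t)) = ψ0 (c.inc (c.ret (c.inc (φ t))))
    rw [h2]
  have hi : ψ ∘ₗ c.i = 0 := by
    refine gen hT hpres c.hK _ (fun t => ?_)
    rw [LinearMap.comp_assoc, ← hψ]
    have : Fm T c.p (c.i ∘ₗ t) = 0 := by
      refine LinearMap.ext fun x => ?_
      exact c.ses.ex.apply_apply_eq_zero _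
    rw [this, map_zero]
  obtain ⟨b, hb⟩ := c.ses.descend ψ hi
  refine ⟨b, ?_⟩
  refine LinearMap.ext fun φ => ?_
  obtain ⟨φ', rfl⟩ := (F_ses (T := T) c.ses (ez_FF hT c.hK 0)).surj φ
  rw [hψ, ← hb]
  rfl

theorem full (hT : FiltP (StdC Q) T)
    (hpres : ∀ l, Nonempty (Pres (CostdC Q) T (Q.costd l)))
    {I Y : ModuleCat.{0} S} (hI : Module.Injective S ↥I) (hY : FiltP (CostdC Q) Y) :
    ∀ (φ : ↥(FT T Y) →ₗ[RingelDualRing S T] ↥(FT T I)),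
    ∃ c : ↥Y →ₗ[S] ↥I, φ = Fm T c := by
  induction hY with
  | zero hsub =>
    intro φ
    refine ⟨0, LinearMap.ext fun x => ?_⟩
    have : x = 0 := LinearMap.ext fun t => Subsingleton.elim _ _
    rw [this, map_zero, map_zero]
  | @cons A Y D f g hA hD hs ih =>
    intro φ
    obtain ⟨l, rfl⟩ := hD
    obtain ⟨a, ha⟩ := ih (φ ∘ₗ Fm T f)
    obtain ⟨b, hb⟩ := hI.out f hs.inj a
    have hF := F_ses (T := T) hs (ez_FF hT hA 0)
    have h0 : (φ - Fm T b) ∘ₗ Fm T f = 0 := by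
      rw [LinearMap.sub_comp, ha, sub_eq_zero]
      refine LinearMap.ext fun x => LinearMap.ext fun t => ?_
      exact (hb _).symm
    obtain ⟨χ, hχ⟩ := hF.descend _ h0
    obtain ⟨c, rfl⟩ := full_base hT hpres l χ
    refine ⟨b + c ∘ₗ g, ?_⟩
    rw [← sub_add_cancel φ (Fm T b), ← hχ]
    refine LinearMap.ext fun x => LinearMap.ext fun t => ?_
    exact add_comm _ _

theorem ez_F_inj (hT : FiltP (StdC Q) T)
    (hpres : ∀ l, Nonempty (Pres (CostdC Q) T (Q.costd l)))
    {I : ModuleCat.{0} S} (hI : Module.Injective S ↥I) (l : Λ) :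
    EZ (FT T (Q.costd l)) (FT T I) 1 := by
  obtain ⟨c⟩ := hpres l
  have hF := F_ses (T := T) c.ses (ez_FF hT c.hK 0)
  refine hF.ez_one (ez_proj c.proj 0) ?_
  intro u
  obtain ⟨a, rfl⟩ := full hT hpres hI c.hK u
  obtain ⟨b, hb⟩ := hI.out c.i c.ses.inj a
  refine ⟨Fm T b, ?_⟩
  refine LinearMap.ext fun x => LinearMap.ext fun t => ?_
  exact hb _

theorem F_filt (hT : FiltP (StdC Q) T) {Y : ModuleCat.{0} S} (hY : FiltP (CostdC Q) Y) :
    FiltP (fun X => ∃ l, X = FT T (Q.costd l)) (FT T Y) := by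
  induction hY with
  | zero hsub =>
    refine .zero ⟨fun x y => LinearMap.ext fun t => Subsingleton.elim _ _⟩
  | @cons A Y D f g hA hD hs ih =>
    obtain ⟨l, rfl⟩ := hD
    exact .cons ih ⟨l, rfl⟩ (F_ses (T := T) hs (ez_FF hT hA 0))

theorem exists_pres [IsArtinianRing S] (hE : EnoughInj S)
    (hT : FiltP (StdC Q) T) (hT2 : FiltP (CostdC Q) T) (hTf : Module.Finite S ↥T)
    (Q' : QHData (RingelDualRing S T) Λᵒᵈ)
    (hiso : ∀ l : Λ, Nonempty (↥(Q'.std (OrderDual.toDual l)) ≃ₗ[RingelDualRing S T]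
        (↥T →ₗ[S] ↥(Q.costd l)))) (l : Λ) : Nonempty (Pres (CostdC Q) T (Q.costd l)) := by
  have hproj := (Q'.projCover (OrderDual.toDual l)).1
  obtain ⟨-, π, hπ, hsup⟩ := Q'.projCover (OrderDual.toDual l)
  have hsimple := Q'.simpleL (OrderDual.toDual l)
  have hnt := hsimple.nontrivial
  obtain ⟨z, hz⟩ := exists_ne (0 : ↥(Q'.L (OrderDual.toDual l)))
  obtain ⟨x, rfl⟩ := hπ z
  have hspan : Submodule.span (RingelDualRing S T) {x} = ⊤ := by
    apply hsup
    have hco : IsCoatom (LinearMap.ker π) := by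
      rw [← isSimpleModule_iff_isCoatom]
      exact IsSimpleModule.congr (π.quotKerEquivOfSurjective hπ)
    apply hco.2
    refine lt_of_le_of_ne le_sup_right (fun e => hz ?_)
    have : x ∈ LinearMap.ker π := by
      rw [e]
      exact Submodule.mem_sup_left (Submodule.mem_span_singleton_self x)
    exact this
  let ρ := LinearMap.toSpanSingleton (RingelDualRing S T) _ x
  have hρ : Function.Surjective ρ := by
    intro y
    have : y ∈ Submodule.span (RingelDualRing S T) {x} := by rw [hspan]; trivial
    obtain ⟨a, rfl⟩ := Submodule.mem_span_singleton.1 this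
    exact ⟨a, rfl⟩
  obtain ⟨σ, hσ⟩ := Module.projective_lifting_property ρ LinearMap.id hρ
  have hσ' : ∀ y, (σ y) • x = y := fun y => LinearMap.congr_fun hσ y
  let ε : ↥T →ₗ[S] ↥T := (σ x).unop
  have hidem : σ x * σ x = σ x := by
    have h1 : σ x * σ x = σ ((σ x) • x) := by rw [map_smul]; rfl
    rw [h1, hσ']
  have hε : ∀ t, ε (ε t) = ε t := fun t =>
    LinearMap.congr_fun (congrArg MulOpposite.unop hidem) t
  obtain ⟨X, inc, ret, hret, hir⟩ : ∃ (X : ModuleCat.{0} S) (inc : ↥X →ₗ[S] ↥T)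
      (ret : ↥T →ₗ[S] ↥X), ret ∘ₗ inc = LinearMap.id ∧ ∀ t, inc (ret t) = ε t := by
    refine ⟨ModuleCat.of S ↥(LinearMap.range ε), (LinearMap.range ε).subtype,
      ε.rangeRestrict, ?_, fun t => rfl⟩
    refine LinearMap.ext ?_
    rintro ⟨_, ⟨t, rfl⟩⟩
    exact Subtype.ext (hε t)
  have hinc : Function.Injective inc :=
    Function.LeftInverse.injective (g := ret) (fun y => LinearMap.congr_fun hret y)
  have hXf : Module.Finite S ↥X := finite_sub (B := T) inc hinc hTf
  have hXc : FiltP (CostdC Q) X := by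
    refine crit hE hXf (fun μ => ez_retract_right inc ret hret ?_)
    exact ez_FF (.single ⟨μ, rfl⟩) hT2 0
  let θ : ↥(Q'.P (OrderDual.toDual l)) →ₗ[RingelDualRing S T] ↥(FT T X) :=
    { toFun := fun y => ret ∘ₗ (σ y).unop
      map_add' := fun y z => by
        rw [map_add]; exact LinearMap.comp_add _ _ _
      map_smul' := fun a y => by
        rw [map_smul]; rfl }
  have hθ : Function.Surjective θ := by
    intro φ
    refine ⟨(MulOpposite.op (inc ∘ₗ (show ↥T →ₗ[S] ↥X from φ)) : RingelDualRing S T) • x, ?_⟩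
    rw [map_smul]
    refine LinearMap.ext fun t => ?_
    have h2 : ret (inc ((show ↥T →ₗ[S] ↥X from φ) t)) = (show ↥T →ₗ[S] ↥X from φ) t :=
      LinearMap.congr_fun hret _
    have h3 : ∀ w, ret (ε w) = ret w := fun w => by
      rw [← hir w]; exact LinearMap.congr_fun hret _
    exact (h3 _).trans h2
  cases hXc with
  | zero hsub =>
    exfalso
    apply hz
    have he : σ x = 0 := by
      apply MulOpposite.unop_injective
      refine LinearMap.ext fun t => ?_
      have : ret t = 0 := Subsingleton.elim _ _
      have h4 : inc (ret t) = 0 := by rw [this, map_zero]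
      exact (hir t).symm.trans h4
    have := hσ' x
    rw [he, zero_smul] at this
    rw [← this, map_zero]
  | @cons A _ D f g hA hD hs =>
    obtain ⟨m, rfl⟩ := hD
    have hF := F_ses (T := T) hs (ez_FF hT hA 0)
    obtain ⟨e⟩ := hiso m
    obtain ⟨q, hq, -⟩ := exists_q (Q := Q') (OrderDual.toDual m)
    let w : ↥(Q'.P (OrderDual.toDual l)) →ₗ[RingelDualRing S T] ↥(Q'.L (OrderDual.toDual m)) :=
      q ∘ₗ e.symm.toLinearMap ∘ₗ (Fm T g) ∘ₗ θ
    have hw : Function.Surjective w := hq.comp (e.symm.surjective.comp (hF.surj.comp hθ))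
    have hw0 : w ≠ 0 := by
      intro h
      have := (Q'.simpleL (OrderDual.toDual m)).nontrivial
      obtain ⟨y, hy⟩ := exists_ne (0 : ↥(Q'.L (OrderDual.toDual m)))
      obtain ⟨y', rfl⟩ := hw y
      exact hy (by rw [h]; rfl)
    have hlm : OrderDual.toDual l = OrderDual.toDual m := cf_L (Q := Q') ⟨w, hw0⟩
    obtain rfl : l = m := hlm
    exact ⟨⟨X, A, inc, ret, hret, f, g, hs, hA⟩⟩

theorem main_equiv [IsArtinianRing S] (hE : EnoughInj S)
    (hT : FiltP (StdC Q) T) (hT2 : FiltP (CostdC Q) T) (hTf : Module.Finite S ↥T)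
    (Q' : QHData (RingelDualRing S T) Λᵒᵈ) [IsArtinianRing (RingelDualRing S T)]
    (hE' : EnoughInj (RingelDualRing S T))
    (hfin : ∀ X : ModuleCat.{0} S, Module.Finite S ↥X →
      Module.Finite (RingelDualRing S T) (↥T →ₗ[S] ↥X))
    (hiso : ∀ l : Λ, Nonempty (↥(Q'.std (OrderDual.toDual l)) ≃ₗ[RingelDualRing S T]
        (↥T →ₗ[S] ↥(Q.costd l)))) (d : ℕ) : ∀ C : ModuleCat.{0} S, FiltP (CostdC Q) C →
    ((∀ A : ModuleCat.{0} S, EZ A C (d + 1)) ↔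
      ∀ l, EZ (FT T (Q.costd l)) (FT T C) (d + 1)) := by
  have hpres := exists_pres hE hT hT2 hTf Q' hiso
  have hFI : ∀ J : ModuleCat.{0} S, Module.Injective S ↥J → Module.Finite S ↥J →
      ∀ l n, EZ (FT T (Q.costd l)) (FT T J) (n + 1) := by
    intro J hJ hJf l n
    have h1 : FiltP (CostdC Q') (FT T J) := by
      refine crit hE' (hfin J hJf) (fun μ => ?_)
      obtain ⟨e⟩ := hiso (OrderDual.ofDual μ)
      exact ez_iso_left (A := Q'.std μ) (B := FT T (Q.costd (OrderDual.ofDual μ))) e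
        (ez_F_inj hT hpres hJ _)
    obtain ⟨e⟩ := hiso l
    exact ez_iso_left (A := FT T (Q.costd l)) (B := Q'.std (OrderDual.toDual l)) e.symm
      (ez_FF (.single ⟨_, rfl⟩) h1 n)
  have hstep : ∀ C : ModuleCat.{0} S, FiltP (CostdC Q) C →
      ∃ (J C' : ModuleCat.{0} S) (f : ↥C →ₗ[S] ↥J) (g : ↥J →ₗ[S] ↥C'), Ses f g ∧
        Module.Injective S ↥J ∧ Module.Finite S ↥J ∧ FiltP (CostdC Q) C' := by
    intro C hC
    have hCf : Module.Finite S ↥C := hC.finite (by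
      rintro _ ⟨l, rfl⟩; exact finite_costd hE l)
    obtain ⟨J, f, hJ, hJf, hf⟩ := hE C hCf
    have hs := ses_coker f hf
    refine ⟨J, _, f, _, hs, hJ, hJf, ?_⟩
    refine crit hE ?_ (fun μ => ?_)
    · show Module.Finite S (↥J ⧸ LinearMap.range f)
      infer_instance
    · exact hs.cov_right (ez_inj hJ 0) (ez_FF (.single ⟨μ, rfl⟩) hC 1)
  induction d with
  | zero =>
    intro C hC
    obtain ⟨J, C', f, g, hs, hJ, hJf, hC'⟩ := hstep C hC
    constructor
    · intro h l
      exact ez_F_inj hT hpres (injective_of_ez h) l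
    · intro h A
      have hF := F_ses (T := T) hs (ez_FF hT hC 0)
      have h1 : EZ (FT T C') (FT T C) 1 := by
        refine (F_filt hT hC').ez_left ?_
        rintro _ ⟨l, rfl⟩
        exact h l
      obtain ⟨s, hsec⟩ := hF.lift h1 LinearMap.id
      obtain ⟨σ, rfl⟩ := full hT hpres hJ hC' s
      have hgs : g ∘ₗ σ = LinearMap.id := by
        rw [← sub_eq_zero]
        refine gen hT hpres hC' _ (fun t => ?_)
        have h2 := LinearMap.congr_fun hsec t
        rw [LinearMap.sub_comp, LinearMap.id_comp, sub_eq_zero]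
        exact h2
      have htfae := (hs.ex.split_tfae' ).out 0 1
      obtain ⟨-, r, hr⟩ := htfae.1 ⟨hs.inj, σ, hgs⟩
      exact ez_retract_right f r hr (ez_inj hJ 0)
  | succ d ih =>
    intro C hC
    obtain ⟨J, C', f, g, hs, hJ, hJf, hC'⟩ := hstep C hC
    have hF := F_ses (T := T) hs (ez_FF hT hC 0)
    have ih' := ih C' hC'
    constructor
    · intro h l
      refine hF.cov_left (ih'.1 (fun A => ?_) l) (hFI J hJ hJf l _)
      exact hs.cov_right (ez_inj hJ d) (h A)
    · intro h A
      refine hs.cov_left (ih'.2 (fun l => ?_) A) (ez_inj hJ _)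
      exact hF.cov_right (hFI J hJ hJf l d) (h l)

end Ringel

theorem main_thm (k S Λ : Type) [Field k] [Ring S] [Algebra k S] [FiniteDimensional k S]
    [Fintype Λ] [PartialOrder Λ]
    (QH : QHData S Λ) (T : ModuleCat.{0} S)
    (QH' : QHData (RingelDualRing S T) Λᵒᵈ)
    (hRD : IsRingelDualData S QH T QH') (lam : Λ) :
    injdim S (QH.costd lam) =
      gfd (RingelDualRing S T) QH' (QH'.std (OrderDual.toDual lam)) := by
  obtain ⟨⟨⟨hT1, hT2⟩, hTf, -⟩, hiso⟩ := hRD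
  have hA : IsArtinianRing S := IsArtinianRing.of_finite k S
  have hE : EnoughInj S := enoughInj k
  obtain ⟨hA', hE', hfin⟩ := ringel_fin k T hTf
  unfold injdim gfd
  congr 1
  ext d
  show InjdimLE S _ d ↔ GfdLE _ _ _ d
  have hcf := finite_costd (Q := QH) hE lam
  obtain ⟨e⟩ := hiso lam
  have hdf : Module.Finite (RingelDualRing S T) ↥(QH'.std (OrderDual.toDual lam)) := by
    have := hfin _ hcf
    exact Module.Finite.equiv e.symm
  rw [injdimLE_iff hE hcf, gfdLE_iff hE' hdf,
    main_equiv hE hT1.filtP (inCostdFilt_iff.1 hT2) hTf QH' hE' hfin hiso d _ (.single ⟨lam, rfl⟩)]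
  constructor
  · intro h μ
    obtain ⟨e'⟩ := hiso (OrderDual.ofDual μ)
    exact ez_iso_left (A := QH'.std μ) (B := FT T (QH.costd (OrderDual.ofDual μ))) e'
      (ez_iso_right (B := FT T (QH.costd lam)) e (h _))
  · intro h l
    obtain ⟨e'⟩ := hiso l
    exact ez_iso_left (A := FT T (QH.costd l)) (B := QH'.std (OrderDual.toDual l)) e'.symm
      (ez_iso_right (A := FT T (QH.costd lam)) e.symm (h _))

end QHPaper

open QHPaper in
/-- Let `S` be a quasi-hereditary algebra with Ringel dual `S'`. For every
`lam ∈ Λ⁺`, the injective dimension of the costandard module `∇(lam)` of `S` equals the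
∇-filtration dimension of the standard module `Δ'(lam)` of `S'`. -/
theorem stmt6 (k S Λ : Type) [Field k] [Ring S] [Algebra k S] [FiniteDimensional k S]
    [Fintype Λ] [PartialOrder Λ]
    (QH : QHData S Λ) (T : ModuleCat.{0} S)
    (QH' : QHData (RingelDualRing S T) Λᵒᵈ)
    (hRD : IsRingelDualData S QH T QH') (lam : Λ) :
    injdim S (QH.costd lam) =
      gfd (RingelDualRing S T) QH' (QH'.std (OrderDual.toDual lam)) := by
  exact main_thm k S Λ QH T QH' hRD lam
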